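/- Let Σ_A(ℕ) be a topologically mixing, finitely primitive (BIP) countable Markov shift and let f : Σ_A(ℕ) → ℝ satisfy the Walters condition with Var_1 f < ∞ and finite Gurevich pressure P(f) < ∞. Assume f admits a unique maximizing measure μ. For each β > 1 let μ_β denote the unique equilibrium (Gibbs) measure of βf. Then the family (μ_β)_β satisfies a Large Deviation Principle: for every nonempty cylinder C of Σ_A(ℕ), lim_{β→∞} (1/β) log μ_β(C) = −inf_{x∈C} I(x), where I(x) = −Σ_{j=0}^∞ (f + V − V∘σ − m(f))(σ^j(x)) and V is any bounded calibrated sub-action for f. -/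

import Mathlib

open Filter Topology MeasureTheory
open scoped ENNReal

/-- The countable Markov shift over alphabet ℕ determined by the 0-1 matrix `A`. -/
def MarkovShift (A : ℕ → ℕ → Bool) : Type :=
  {x : ℕ → ℕ // ∀ i, A (x i) (x (i + 1)) = true}

namespace MarkovShift

variable {A : ℕ → ℕ → Bool}

instance : TopologicalSpace (MarkovShift A) :=
  instTopologicalSpaceSubtype

instance : MeasurableSpace (MarkovShift A) := borel _

instance : BorelSpace (MarkovShift A) := ⟨rfl⟩

/-- The shift map. -/
def shift (x : MarkovShift A) : MarkovShift A :=
  ⟨fun n => x.1 (n + 1), fun i => x.2 (i + 1)⟩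

/-- The cylinder set determined by a finite word. -/
def cylinder (w : List ℕ) : Set (MarkovShift A) :=
  {x | ∀ i : Fin w.length, x.1 i = w.get i}

/-- The cylinder set determined by the first `m` coordinates of `x`. -/
def cylOf (x : MarkovShift A) (m : ℕ) : Set (MarkovShift A) :=
  {y | ∀ i < m, y.1 i = x.1 i}

/-- A symbol is admissible when its cylinder is nonempty. -/
def Admissible (A : ℕ → ℕ → Bool) (a : ℕ) : Prop :=
  ∃ x : MarkovShift A, x.1 0 = a

/-- Topologically mixing. -/
def TopologicallyMixing (A : ℕ → ℕ → Bool) : Prop :=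
  ∀ a b : ℕ, Admissible A a → Admissible A b →
    ∃ N : ℕ, ∀ n ≥ N, ∃ x : MarkovShift A, x.1 0 = a ∧ (shift^[n] x).1 0 = b

/-- Finitely primitive (BIP). -/
def FinitelyPrimitive (A : ℕ → ℕ → Bool) : Prop :=
  ∃ (K₀ : ℕ) (F : Finset ℕ), ∀ a b : ℕ, Admissible A a → Admissible A b →
    ∃ w : List ℕ, w.length = K₀ ∧ (∀ c ∈ w, c ∈ F) ∧
      List.Chain' (fun u v => A u v = true) (a :: (w ++ [b]))

/-- First coordinate where two distinct points disagree. -/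
noncomputable def firstDiff (x y : MarkovShift A) (h : x ≠ y) : ℕ :=
  Nat.find (Function.ne_iff.mp (fun hxy : x.1 = y.1 => h (Subtype.ext hxy)))

open Classical in
/-- The metric `d(x,y) = r^{t(x,y)}`. -/
noncomputable def dist' (r : ℝ) (x y : MarkovShift A) : ℝ :=
  if h : x = y then 0 else r ^ firstDiff x y h

/-- Birkhoff sum `S_n f`. -/
def birkhoff (f : MarkovShift A → ℝ) (n : ℕ) (x : MarkovShift A) : ℝ :=
  ∑ j ∈ Finset.range n, f (shift^[j] x)

/-- The set of values `|S_n f x - S_n f y|` over pairs agreeing on the first `m` coordinates. -/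
def varSet (f : MarkovShift A → ℝ) (n m : ℕ) : Set ℝ :=
  {c | ∃ x y : MarkovShift A, (∀ i < m, x.1 i = y.1 i) ∧ c = |birkhoff f n x - birkhoff f n y|}

/-- `Var_m (S_n f)`. -/
noncomputable def varBirk (f : MarkovShift A → ℝ) (n m : ℕ) : ℝ := sSup (varSet f n m)

/-- `Var_1 f < ∞`. -/
def Var1Finite (f : MarkovShift A → ℝ) : Prop := BddAbove (varSet f 1 1)

/-- The set whose supremum is `sup_{n ≥ 1} Var_{n+k}(S_n f)`. -/
def waltersSet (f : MarkovShift A → ℝ) (k : ℕ) : Set ℝ :=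
  {c | ∃ n, 1 ≤ n ∧ c ∈ varSet f n (n + k)}

/-- `M_k = sup_{n ≥ 1} Var_{n+k}(S_n f)`. -/
noncomputable def waltersSup (f : MarkovShift A → ℝ) (k : ℕ) : ℝ := sSup (waltersSet f k)

/-- The Walters condition. -/
def SatisfiesWalters (f : MarkovShift A → ℝ) : Prop :=
  (∀ k, 1 ≤ k → BddAbove (waltersSet f k)) ∧
    Tendsto (fun k => waltersSup f k) atTop (𝓝 0)

/-- The partition function `Z_n(f,a) = Σ_{σ^n x = x, x₀ = a} e^{S_n f (x)}`. -/
noncomputable def partitionSum (f : MarkovShift A → ℝ) (n : ℕ) (a : ℕ) : ℝ :=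
  ∑' x : {x : MarkovShift A // shift^[n] x = x ∧ x.1 0 = a}, Real.exp (birkhoff f n x.1)

/-- `f` has (finite) Gurevich pressure `p`. -/
def HasGurevichPressure (f : MarkovShift A → ℝ) (p : ℝ) : Prop :=
  ∀ a : ℕ, Admissible A a →
    (∀ n, 1 ≤ n → Summable fun x : {x : MarkovShift A // shift^[n] x = x ∧ x.1 0 = a} =>
        Real.exp (birkhoff f n x.1)) ∧
    Tendsto (fun n : ℕ => (1 / (n : ℝ)) * Real.log (partitionSum f n a)) atTop (𝓝 p)

/-- σ-invariant Borel probability measure. -/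
def IsInvariantProb (μ : Measure (MarkovShift A)) : Prop :=
  IsProbabilityMeasure μ ∧ μ.map shift = μ

/-- `m(f)`, the maximal ergodic average. -/
noncomputable def mf (f : MarkovShift A → ℝ) : ℝ :=
  sSup {c | ∃ μ : Measure (MarkovShift A),
    IsInvariantProb μ ∧ Integrable f μ ∧ ∫ x, f x ∂μ = c}

/-- A maximizing measure for `f`. -/
def IsMaximizing (f : MarkovShift A → ℝ) (μ : Measure (MarkovShift A)) : Prop :=
  IsInvariantProb μ ∧ Integrable f μ ∧ ∫ x, f x ∂μ = mf f

/-- Bounded real valued function. -/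
def BoundedFun (g : MarkovShift A → ℝ) : Prop := ∃ C, ∀ x, |g x| ≤ C

/-- A bounded calibrated sub-action for `f`. -/
def IsCalibratedSubaction (f V : MarkovShift A → ℝ) : Prop :=
  Continuous V ∧ BoundedFun V ∧
    (∀ x, f x + V x - V (shift x) - mf f ≤ 0) ∧
    (∀ y, ∃ x, shift x = y ∧ f x + V x - V (shift x) - mf f = 0)

/-- The Ruelle transfer operator `(L_g u)(x) = Σ_{σ y = x} e^{g(y)} u(y)`. -/
noncomputable def ruelle (g u : MarkovShift A → ℝ) (x : MarkovShift A) : ℝ :=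
  ∑' y : {y : MarkovShift A // shift y = x}, Real.exp (g y.1) * u y.1

/-- Ruelle-Perron-Frobenius data for the potential `f` with pressure `p`:
eigenfunction `h`, eigenmeasure `ν`. -/
def IsRPF (f : MarkovShift A → ℝ) (p : ℝ) (h : MarkovShift A → ℝ)
    (ν : Measure (MarkovShift A)) : Prop :=
  Continuous h ∧ (∀ x, 0 < h x) ∧
    (∀ x, ruelle f h x = Real.exp p * h x) ∧
    IsProbabilityMeasure ν ∧
    (∀ g : MarkovShift A → ℝ, Continuous g → BoundedFun g →
      ∫ x, ruelle f g x ∂ν = Real.exp p * ∫ x, g x ∂ν) ∧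
    ∫ x, h x ∂ν = 1

/-- The Gibbs measure `dμ = h dν`. -/
noncomputable def gibbs (h : MarkovShift A → ℝ) (ν : Measure (MarkovShift A)) :
    Measure (MarkovShift A) :=
  ν.withDensity fun x => ENNReal.ofReal (h x)

/-- The Mañé potential `S_f(x,y)` (with respect to the metric of parameter `r`). -/
noncomputable def manePot (r : ℝ) (f : MarkovShift A → ℝ) (x y : MarkovShift A) : EReal :=
  ⨅ ε : {ε : ℝ // 0 < ε}, ⨆ n : {n : ℕ // 1 ≤ n},
    ⨆ _z : {z : MarkovShift A // dist' r x z < ε.1 ∧ shift^[n.1] z = y},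
      ((birkhoff (fun w => f w - mf f) n.1 _z.1 : ℝ) : EReal)

/-- The (topological) support of a measure. -/
def msupport (μ : Measure (MarkovShift A)) : Set (MarkovShift A) :=
  {x | ∀ U : Set (MarkovShift A), IsOpen U → x ∈ U → 0 < μ U}

end MarkovShift

namespace MarkovShift

/-!
The Gibbs measure of `βf` is a `g`-measure for `exp (β (f + φ - φ ∘ σ - q))`, where `φ` is `1/β`
times the logarithm of the eigenfunction and `q` is `1/β` times the pressure. The oscillation and
the modulus of continuity of `φ` are bounded uniformly in `β`, so along every ultrafilter `β → ∞`
the normalized potentials converge to the defect of a sub-action, which is calibrated because the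
branch weights at every point sum to `1`. Uniqueness of the maximizing measure makes calibrated
sub-actions for `f` agree up to a constant, hence the limit is `f + V - V ∘ σ - m(f)`.

By bounded distortion, `(1/β) log μ_β` of the `(n + k)`-cylinder at `x` equals the `n`-th Birkhoff
sum of the normalized potential at `x` plus the same quantity for the `k`-cylinder at `σⁿ x`, up to
an error depending only on `k`. For the upper bound, a cylinder of exponential size `e^{βt}` has,
by tightness, a child of the same exponential size; iterating gives a point of the cylinder all of
whose Birkhoff sums are at least `t`. For the lower bound, the orbit of a point with finite rate
accumulates at almost every point of the maximizing measure, and the cylinders around such points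
have subexponential cost.
-/

/-! ### The shift space -/

section ShiftSpace

variable {A : ℕ → ℕ → Bool}

theorem continuous_coord (i : ℕ) : Continuous fun x : MarkovShift A => x.1 i :=
  (continuous_apply i).comp continuous_subtype_val

theorem continuous_of_coord {X : Type*} [TopologicalSpace X] {g : X → MarkovShift A}
    (hg : ∀ i, Continuous fun x => (g x).1 i) : Continuous g :=
  Continuous.subtype_mk (continuous_pi hg) _

theorem isClosed_admissibleSequences (A : ℕ → ℕ → Bool) :
    IsClosed {x : ℕ → ℕ | ∀ i, A (x i) (x (i + 1)) = true} := by
  rw [Set.ofPred_forall]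
  refine isClosed_iInter fun i => isClosed_eq ?_ continuous_const
  have hpair : Continuous fun x : ℕ → ℕ => (x i, x (i + 1)) :=
    (continuous_apply i).prodMk (continuous_apply (i + 1))
  exact (continuous_of_discreteTopology (f := fun p : ℕ × ℕ => A p.1 p.2)).comp hpair

instance instPolishSpace : PolishSpace (MarkovShift A) :=
  (isClosed_admissibleSequences A).polishSpace

theorem isCompact_box (F : ℕ → Finset ℕ) : IsCompact {x : MarkovShift A | ∀ i, x.1 i ∈ F i} := by
  have hbox : IsCompact (Set.univ.pi fun i => (F i : Set ℕ)) :=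
    isCompact_univ_pi fun i => (F i).finite_toSet.isCompact
  refine (congrArg IsCompact (Set.ext fun x => ?_)).mp
    ((isClosed_admissibleSequences A).isClosedEmbedding_subtypeVal.isCompact_preimage hbox)
  exact Set.mem_univ_pi (t := fun i => (F i : Set ℕ))

theorem ext_coord {x y : MarkovShift A} (h : ∀ i, x.1 i = y.1 i) : x = y :=
  Subtype.ext (funext h)

theorem continuous_shift : Continuous (shift : MarkovShift A → MarkovShift A) :=
  continuous_of_coord fun i => continuous_coord (i + 1)

theorem shift_iterate_coord (x : MarkovShift A) (n i : ℕ) :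
    (shift^[n] x).1 i = x.1 (n + i) := by
  induction n generalizing x with
  | zero => rw [Function.iterate_zero_apply, zero_add]
  | succ n ih =>
    rw [Function.iterate_succ_apply, ih, show n + 1 + i = n + i + 1 by omega]
    rfl

/-- The sequence `a x₀ x₁ …` obtained by prepending the symbol `a` to `x`; it is `x` itself when
the transition from `a` to `x₀` is forbidden. -/
def cons (a : ℕ) (x : MarkovShift A) : MarkovShift A :=
  if h : A a (x.1 0) = true then
    ⟨fun i => Nat.casesOn i a fun j => x.1 j, fun i => by
      cases i with
      | zero => exact h
      | succ j => exact x.2 j⟩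
  else x

theorem cons_zero {a : ℕ} {x : MarkovShift A} (h : A a (x.1 0) = true) :
    (cons a x).1 0 = a := by
  simp [cons, h]

theorem cons_succ {a : ℕ} {x : MarkovShift A} (h : A a (x.1 0) = true) (i : ℕ) :
    (cons a x).1 (i + 1) = x.1 i := by
  simp [cons, h]

theorem shift_cons {a : ℕ} {x : MarkovShift A} (h : A a (x.1 0) = true) :
    shift (cons a x) = x :=
  ext_coord (cons_succ h)

theorem cons_shift (y : MarkovShift A) : cons (y.1 0) (shift y) = y := by
  have h : A (y.1 0) ((shift y).1 0) = true := y.2 0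
  refine ext_coord fun i => ?_
  cases i with
  | zero => exact cons_zero h
  | succ j => exact cons_succ h j

theorem isClopen_setOf_coord (p : ℕ → Prop) (i : ℕ) : IsClopen {x : MarkovShift A | p (x.1 i)} :=
  (isClopen_discrete {a | p a}).preimage (continuous_coord i)

theorem continuous_cons (a : ℕ) : Continuous (cons a : MarkovShift A → MarkovShift A) := by
  refine continuous_of_coord fun i => ?_
  have hite (u v : MarkovShift A → ℕ) (hu : Continuous u) (hv : Continuous v) :
      Continuous fun x => if A a (x.1 0) = true then u x else v x :=
    hu.if (fun x hx => by
      rw [(isClopen_setOf_coord (fun b => A a b = true) 0).frontier_eq] at hx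
      exact hx.elim) hv
  cases i with
  | zero =>
    refine (hite _ _ (continuous_const (y := a)) (continuous_coord 0)).congr fun x => ?_
    by_cases h : A a (x.1 0) = true <;> simp [cons, h]
  | succ j =>
    refine (hite _ _ (continuous_coord j) (continuous_coord (j + 1))).congr fun x => ?_
    by_cases h : A a (x.1 0) = true <;> simp [cons, h]

open Classical in
/-- The sequence `z₀ … zₙ₋₁ x₀ x₁ …`; it is `x` itself unless `x₀ = zₙ`. -/
noncomputable def glue (z : MarkovShift A) (n : ℕ) (x : MarkovShift A) : MarkovShift A :=
  if h : x.1 0 = z.1 n then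
    ⟨fun i => if i < n then z.1 i else x.1 (i - n), fun i => by
      rcases lt_trichotomy (i + 1) n with hi | hi | hi
      · simpa only [hi, show i < n by omega, if_true] using z.2 i
      · simp only [show i < n by omega, if_true, show ¬ (i + 1 < n) by omega, if_false]
        rw [show i + 1 - n = 0 by omega, h, ← hi]
        exact z.2 i
      · simp only [show ¬ i < n by omega, show ¬ (i + 1 < n) by omega, if_false]
        rw [show i + 1 - n = (i - n) + 1 by omega]
        exact x.2 _⟩
  else x

theorem glue_coord_of_lt {z x : MarkovShift A} {n : ℕ} (h : x.1 0 = z.1 n) {i : ℕ} (hi : i < n) :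
    (glue z n x).1 i = z.1 i := by
  simp [glue, h, hi]

theorem glue_coord_add {z x : MarkovShift A} {n : ℕ} (h : x.1 0 = z.1 n) (i : ℕ) :
    (glue z n x).1 (n + i) = x.1 i := by
  simp [glue, h]

theorem shift_iterate_glue {z x : MarkovShift A} {n : ℕ} (h : x.1 0 = z.1 n) :
    shift^[n] (glue z n x) = x :=
  ext_coord fun i => by rw [shift_iterate_coord, glue_coord_add h]

theorem isClopen_cylOf (x : MarkovShift A) (m : ℕ) : IsClopen (cylOf x m) := by
  have : cylOf x m = ⋂ i ∈ Finset.range m, {y : MarkovShift A | y.1 i = x.1 i} := by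
    ext y
    simp [cylOf]
  rw [this]
  exact Set.Finite.isClopen_biInter (Finset.finite_toSet _) fun i _ =>
    isClopen_setOf_coord (· = x.1 i) i

theorem self_mem_cylOf (x : MarkovShift A) (m : ℕ) : x ∈ cylOf x m := fun _ _ => rfl

theorem cylOf_zero (x : MarkovShift A) : cylOf x 0 = Set.univ :=
  Set.eq_univ_of_forall fun _ _ hi => absurd hi (Nat.not_lt_zero _)

theorem cylOf_eq_of_mem {x y : MarkovShift A} {m : ℕ} (h : y ∈ cylOf x m) :
    cylOf y m = cylOf x m :=
  Set.ext fun _ => forall₂_congr fun i hi => by rw [h i hi]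

theorem cylOf_mem_nhds (x : MarkovShift A) (m : ℕ) : cylOf x m ∈ 𝓝 x :=
  (isClopen_cylOf x m).isOpen.mem_nhds (self_mem_cylOf x m)

theorem cylinder_eq_cylOf {w : List ℕ} {y : MarkovShift A} (hy : y ∈ cylinder w) :
    cylinder w = cylOf y w.length := by
  ext z
  refine ⟨fun hz i hi => ?_, fun hz i => ?_⟩
  · rw [hz ⟨i, hi⟩, hy ⟨i, hi⟩]
  · rw [hz i i.2, hy i]

theorem exists_cylOf_subset {x : MarkovShift A} {U : Set (MarkovShift A)} (hU : U ∈ 𝓝 x) :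
    ∃ m, cylOf x m ⊆ U := by
  by_contra! hcon
  choose y hy hyU using fun m => Set.not_subset.1 (hcon m)
  have hlim : Tendsto y atTop (𝓝 x) := by
    refine tendsto_subtype_rng.2 (tendsto_pi_nhds.2 fun i => tendsto_const_nhds.congr' ?_)
    filter_upwards [eventually_gt_atTop i] with m hm
    exact (hy m i hm).symm
  obtain ⟨m, hm⟩ := (hlim.eventually hU).exists
  exact hyU m hm

theorem shift_iterate_mem_cylOf {x y : MarkovShift A} {n k : ℕ} (h : y ∈ cylOf x (n + k)) :
    shift^[n] y ∈ cylOf (shift^[n] x) k := fun i hi => by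
  rw [shift_iterate_coord, shift_iterate_coord, h (n + i) (by omega)]

theorem coord_zero_eq_of_mem_cylOf {x y : MarkovShift A} {n k : ℕ} (hk : 1 ≤ k)
    (h : x ∈ cylOf (shift^[n] y) k) : x.1 0 = y.1 n := by
  rw [h 0 hk, shift_iterate_coord, add_zero]

theorem glue_mem_cylOf {x y : MarkovShift A} {n k : ℕ} (hk : 1 ≤ k)
    (h : x ∈ cylOf (shift^[n] y) k) : glue y n x ∈ cylOf y (n + k) := by
  have h0 := coord_zero_eq_of_mem_cylOf hk h
  intro i hi
  rcases lt_or_ge i n with hin | hin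
  · exact glue_coord_of_lt h0 hin
  · obtain ⟨j, rfl⟩ := Nat.exists_eq_add_of_le hin
    rw [glue_coord_add h0, h j (by omega), shift_iterate_coord]

theorem glue_shift_iterate {y z : MarkovShift A} {n : ℕ} (h : z ∈ cylOf y (n + 1)) :
    glue y n (shift^[n] z) = z := by
  have h0 := coord_zero_eq_of_mem_cylOf le_rfl (shift_iterate_mem_cylOf h)
  refine ext_coord fun i => ?_
  rcases lt_or_ge i n with hi | hi
  · rw [glue_coord_of_lt h0 hi, h i (by omega)]
  · obtain ⟨j, rfl⟩ := Nat.exists_eq_add_of_le hi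
    rw [glue_coord_add h0, shift_iterate_coord]

theorem exists_forall_mem_cylOf {Y : ℕ → MarkovShift A} {n : ℕ}
    (hY : ∀ i, Y (i + 1) ∈ cylOf (Y i) (n + i)) : ∃ z, ∀ i, z ∈ cylOf (Y i) (n + i) := by
  have hstable {i i' j : ℕ} (hi : i ≤ i') (hj : j < n + i) : (Y i').1 j = (Y i).1 j := by
    induction i', hi using Nat.le_induction with
    | base => rfl
    | succ i' hi ih => exact (hY i' j (by omega)).trans ih
  refine ⟨⟨fun j => (Y (j + 1)).1 j, fun j => ?_⟩, fun i j hj => ?_⟩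
  · have hj := (Y (j + 2)).2 j
    rwa [hstable (Nat.le_succ (j + 1)) (by omega : j < n + (j + 1))] at hj
  · rcases le_total i (j + 1) with hij | hij
    · exact hstable hij hj
    · exact (hstable hij (by omega)).symm

theorem continuous_of_modulus {g : MarkovShift A → ℝ} {M : ℕ → ℝ} (hM : Tendsto M atTop (𝓝 0))
    (m : ℕ) (hg : ∀ k, 1 ≤ k → ∀ x y, (∀ i < m + k, x.1 i = y.1 i) → |g x - g y| ≤ M k) :
    Continuous g := by
  refine continuous_iff_continuousAt.2 fun x => Metric.tendsto_nhds.2 fun ε hε => ?_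
  obtain ⟨k, hk, hkε⟩ := ((eventually_ge_atTop 1).and (hM.eventually (gt_mem_nhds hε))).exists
  filter_upwards [cylOf_mem_nhds x (m + k)] with y hy
  exact (hg k hk y x hy).trans_lt hkε

/-- Pointwise form of finite primitivity: any point can be reached in `K + 1` steps from any
symbol, through symbols of `F`. -/
def IsConnectedVia (A : ℕ → ℕ → Bool) (K : ℕ) (F : Finset ℕ) : Prop :=
  ∀ y x : MarkovShift A, ∃ z : MarkovShift A, z.1 0 = y.1 0 ∧ shift^[K + 1] z = x ∧
    ∀ i < K, z.1 (i + 1) ∈ F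

theorem exists_of_isChain {F : Finset ℕ} {x : MarkovShift A} {w : List ℕ} {a : ℕ}
    (hF : ∀ c ∈ w, c ∈ F) (hw : List.IsChain (fun u v => A u v = true) (a :: (w ++ [x.1 0]))) :
    ∃ z : MarkovShift A, z.1 0 = a ∧ shift^[w.length + 1] z = x ∧
      ∀ i < w.length, z.1 (i + 1) ∈ F := by
  induction w generalizing a with
  | nil =>
    have h : A a (x.1 0) = true := by simpa using hw
    exact ⟨cons a x, cons_zero h, shift_cons h, fun i hi => absurd hi (Nat.not_lt_zero i)⟩
  | cons c w ih =>
    rw [List.cons_append, List.isChain_cons_cons] at hw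
    obtain ⟨z, hz, hzx, hzF⟩ := ih (fun d hd => hF d (List.mem_cons_of_mem c hd)) hw.2
    have h : A a (z.1 0) = true := hz ▸ hw.1
    refine ⟨cons a z, cons_zero h, ?_, ?_⟩
    · rw [List.length_cons, Function.iterate_succ_apply, shift_cons h, hzx]
    · rintro (_ | i) hi
      · rw [cons_succ h, hz]
        exact hF c List.mem_cons_self
      · rw [cons_succ h]
        exact hzF i (Nat.lt_of_succ_lt_succ hi)

theorem FinitelyPrimitive.exists_isConnectedVia (h : FinitelyPrimitive A) :
    ∃ K F, IsConnectedVia A K F := by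
  obtain ⟨K, F, h⟩ := h
  refine ⟨K, F, fun y x => ?_⟩
  obtain ⟨w, rfl, hF, hw⟩ := h (y.1 0) (x.1 0) ⟨y, rfl⟩ ⟨x, rfl⟩
  exact exists_of_isChain hF hw

variable {K : ℕ} {F : Finset ℕ}

theorem IsConnectedVia.exists_mem_cylOf (h : IsConnectedVia A K F) (y x : MarkovShift A) (n : ℕ) :
    ∃ z ∈ cylOf y (n + 1), shift^[K + 1 + n] z = x := by
  obtain ⟨z, hz, hzx, -⟩ := h (shift^[n] y) x
  have hmem : z ∈ cylOf (shift^[n] y) 1 := fun i hi => by rwa [Nat.lt_one_iff.1 hi]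
  refine ⟨glue y n z, glue_mem_cylOf le_rfl hmem, ?_⟩
  rw [Function.iterate_add_apply,
    shift_iterate_glue (coord_zero_eq_of_mem_cylOf le_rfl hmem), hzx]

theorem birkhoff_zero (f : MarkovShift A → ℝ) (x : MarkovShift A) : birkhoff f 0 x = 0 :=
  birkhoffSum_zero shift f x

theorem birkhoff_one (f : MarkovShift A → ℝ) (x : MarkovShift A) : birkhoff f 1 x = f x :=
  birkhoffSum_one shift f x

theorem birkhoff_add (f : MarkovShift A → ℝ) (m n : ℕ) (x : MarkovShift A) :
    birkhoff f (m + n) x = birkhoff f m x + birkhoff f n (shift^[m] x) :=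
  birkhoffSum_add shift f m n x

theorem birkhoff_succ (f : MarkovShift A → ℝ) (n : ℕ) (x : MarkovShift A) :
    birkhoff f (n + 1) x = birkhoff f n x + f (shift^[n] x) :=
  birkhoffSum_succ shift f n x

theorem birkhoff_succ' (f : MarkovShift A → ℝ) (n : ℕ) (x : MarkovShift A) :
    birkhoff f (n + 1) x = f x + birkhoff f n (shift x) :=
  birkhoffSum_succ' shift f n x

theorem birkhoff_const_mul (c : ℝ) (f : MarkovShift A → ℝ) (n : ℕ) (x : MarkovShift A) :
    birkhoff (fun y => c * f y) n x = c * birkhoff f n x :=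
  (Finset.mul_sum ..).symm

/-- The potential `f + V - V ∘ σ - m`, cohomologous to `f` up to the constant `m`. -/
def reduced (f V : MarkovShift A → ℝ) (m : ℝ) (x : MarkovShift A) : ℝ :=
  f x + V x - V (shift x) - m

theorem birkhoff_reduced (f V : MarkovShift A → ℝ) (m : ℝ) (n : ℕ) (x : MarkovShift A) :
    birkhoff (reduced f V m) n x = birkhoff f n x + V x - V (shift^[n] x) - n * m := by
  induction n with
  | zero => simp [birkhoff_zero]
  | succ n ih =>
    rw [birkhoff_succ, ih, birkhoff_succ, reduced, Function.iterate_succ_apply']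
    push_cast
    ring

theorem mul_reduced (c : ℝ) (f V : MarkovShift A → ℝ) (m : ℝ) (x : MarkovShift A) :
    c * reduced f V m x = reduced (fun y => c * f y) (fun y => c * V y) (c * m) x := by
  simp only [reduced]
  ring

end ShiftSpace

/-! ### Controlled potentials -/

section Control

variable {A : ℕ → ℕ → Bool} {K : ℕ} {F : Finset ℕ} {f : MarkovShift A → ℝ} {s : ℕ → ℝ} {C : ℝ}
  {M : ℕ → ℝ}

/-- Quantitative control of a potential `f`: up to an error `C` it depends only on the first
symbol, through a function `s` with `∑ exp (s a) < ∞`, and the oscillations of its Birkhoff sums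
are dominated by a sequence `M` tending to `0`, as in the Walters condition. -/
structure IsControlled (f : MarkovShift A → ℝ) (s : ℕ → ℝ) (C : ℝ) (M : ℕ → ℝ) : Prop where
  le_symbol : ∀ x, f x ≤ s (x.1 0)
  symbol_le : ∀ x, s (x.1 0) - C ≤ f x
  summable_exp : Summable fun a => Real.exp (s a)
  abs_birkhoff_sub_le : ∀ n k, 1 ≤ k → ∀ x y : MarkovShift A, (∀ i < n + k, x.1 i = y.1 i) →
    |birkhoff f n x - birkhoff f n y| ≤ M k
  tendsto_modulus : Tendsto M atTop (𝓝 0)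

theorem IsControlled.continuous (h : IsControlled f s C M) : Continuous f :=
  continuous_of_modulus h.tendsto_modulus 1 fun k hk x y hxy => by
    simpa only [birkhoff_one] using h.abs_birkhoff_sub_le 1 k hk x y hxy

theorem IsControlled.const_mul (h : IsControlled f s C M) {β : ℝ} (hβ : 1 < β) :
    IsControlled (fun x => β * f x) (fun a => β * s a) (β * C) (fun k => β * M k) where
  le_symbol x := mul_le_mul_of_nonneg_left (h.le_symbol x) (by linarith)
  symbol_le x := by
    rw [← mul_sub]
    exact mul_le_mul_of_nonneg_left (h.symbol_le x) (by linarith)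
  summable_exp := by
    refine Summable.of_norm_bounded_eventually h.summable_exp ?_
    filter_upwards [h.summable_exp.tendsto_cofinite_zero.eventually (gt_mem_nhds one_pos)]
      with a ha
    rw [Real.norm_eq_abs, Real.abs_exp, Real.exp_le_exp]
    nlinarith [Real.exp_lt_one_iff.1 ha]
  abs_birkhoff_sub_le n k hk x y hxy := by
    rw [birkhoff_const_mul, birkhoff_const_mul, ← mul_sub, abs_mul, abs_of_pos (by linarith)]
    exact mul_le_mul_of_nonneg_left (h.abs_birkhoff_sub_le n k hk x y hxy) (by linarith)
  tendsto_modulus := by simpa only [mul_zero] using h.tendsto_modulus.const_mul β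

theorem SatisfiesWalters.abs_birkhoff_sub_le (hW : SatisfiesWalters f) (n k : ℕ) (hk : 1 ≤ k)
    (x y : MarkovShift A) (hxy : ∀ i < n + k, x.1 i = y.1 i) :
    |birkhoff f n x - birkhoff f n y| ≤ waltersSup f k := by
  have hle {n : ℕ} (hn : 1 ≤ n) {x y : MarkovShift A} (hxy : ∀ i < n + k, x.1 i = y.1 i) :
      |birkhoff f n x - birkhoff f n y| ≤ waltersSup f k :=
    le_csSup (hW.1 k hk) ⟨n, hn, x, y, hxy, rfl⟩
  rcases Nat.eq_zero_or_pos n with rfl | hn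
  · simpa only [birkhoff_zero, sub_self, abs_zero] using hle le_rfl (x := x) fun _ _ => rfl
  · exact hle hn hxy

open Classical in
/-- The supremum of `f` over the cylinder `[a]`; for an inadmissible `a` it is `-a`, a value chosen
so that these symbols do not affect the summability of `exp (symbolSup f a)`. -/
noncomputable def symbolSup (f : MarkovShift A → ℝ) (a : ℕ) : ℝ :=
  if Admissible A a then sSup (f '' {x | x.1 0 = a}) else -(a : ℝ)

theorem le_symbolSup_and_le (hC : ∀ x y : MarkovShift A, x.1 0 = y.1 0 → |f x - f y| ≤ C)
    (x : MarkovShift A) : f x ≤ symbolSup f (x.1 0) ∧ symbolSup f (x.1 0) - C ≤ f x := by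
  have hle : ∀ u ∈ f '' {y | y.1 0 = x.1 0}, u ≤ f x + C := by
    rintro _ ⟨y, hy, rfl⟩
    linarith [(abs_le.1 (hC y x hy)).2]
  rw [symbolSup, if_pos ⟨x, rfl⟩, sub_le_iff_le_add]
  exact ⟨le_csSup ⟨_, hle⟩ ⟨x, rfl, rfl⟩, csSup_le ⟨_, x, rfl, rfl⟩ hle⟩

/-- The periodic point of period `n` with the same first `n` symbols as `z`. -/
def periodicPoint (z : MarkovShift A) (n : ℕ) (hn : 0 < n) (h : z.1 n = z.1 0) : MarkovShift A :=
  ⟨fun i => z.1 (i % n), fun i => by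
    change A (z.1 (i % n)) (z.1 ((i + 1) % n)) = true
    rcases (Nat.succ_le_of_lt (Nat.mod_lt i hn)).lt_or_eq with hi | hi
    · rw [show (i + 1) % n = i % n + 1 by rw [← Nat.mod_add_mod, Nat.mod_eq_of_lt hi]]
      exact z.2 _
    · rw [show (i + 1) % n = 0 by rw [← Nat.mod_add_mod, ← Nat.succ_eq_add_one, hi, Nat.mod_self],
        ← h]
      simpa only [← Nat.succ_eq_add_one, hi] using z.2 (i % n)⟩

theorem shift_iterate_periodicPoint (z : MarkovShift A) (n : ℕ) (hn : 0 < n)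
    (h : z.1 n = z.1 0) : shift^[n] (periodicPoint z n hn h) = periodicPoint z n hn h :=
  ext_coord fun i => by
    rw [shift_iterate_coord]
    exact congrArg z.1 (Nat.add_mod_left n i)

theorem periodicPoint_coord (z : MarkovShift A) {n i : ℕ} (hn : 0 < n) (h : z.1 n = z.1 0)
    (hi : i < n) : (periodicPoint z n hn h).1 i = z.1 i :=
  congrArg z.1 (Nat.mod_eq_of_lt hi)

theorem IsConnectedVia.exists_periodic (h : IsConnectedVia A K F) (x₀ y : MarkovShift A) :
    ∃ x : MarkovShift A, (shift^[2 * K + 2] x = x ∧ x.1 0 = x₀.1 0) ∧ x.1 (K + 1) = y.1 0 ∧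
      ∀ j < 2 * K + 2, j ≠ K + 1 → x.1 j ∈ insert (x₀.1 0) F := by
  obtain ⟨u, hu0, hux, huF⟩ := h y x₀
  obtain ⟨v, hv0, hvu, hvF⟩ := h x₀ u
  have hv (i : ℕ) : v.1 (K + 1 + i) = u.1 i := by rw [← hvu, shift_iterate_coord]
  have hu (i : ℕ) : u.1 (K + 1 + i) = x₀.1 i := by rw [← hux, shift_iterate_coord]
  have hper : v.1 (2 * K + 2) = v.1 0 := by
    rw [show 2 * K + 2 = K + 1 + (K + 1 + 0) by omega, hv, hu, hv0]
  refine ⟨periodicPoint v (2 * K + 2) (by omega) hper, ⟨shift_iterate_periodicPoint .., ?_⟩, ?_, ?_⟩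
  · rw [periodicPoint_coord v _ hper (by omega), hv0]
  · rw [periodicPoint_coord v _ hper (by omega), ← add_zero (K + 1), hv, hu0]
  intro j hj hne
  rw [periodicPoint_coord v _ hper hj, Finset.mem_insert]
  rcases Nat.eq_zero_or_pos j with rfl | hpos
  · exact Or.inl hv0
  right
  rcases hne.lt_or_gt with hlt | hgt
  · obtain ⟨i, rfl⟩ := Nat.exists_eq_add_of_le' hpos
    exact hvF i (by omega)
  · obtain ⟨i, rfl⟩ := Nat.exists_eq_add_of_lt hgt
    rw [add_assoc, hv]
    exact huF i (by omega)

theorem exists_forall_mem_finset_neg_le (hf : ∀ x, s (x.1 0) - C ≤ f x) (T : Finset ℕ) :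
    ∃ c, 0 ≤ c ∧ ∀ x : MarkovShift A, x.1 0 ∈ T → -c ≤ f x := by
  refine ⟨∑ a ∈ T, |s a - C|, Finset.sum_nonneg fun a _ => abs_nonneg _, fun x hx => ?_⟩
  have hle : |s (x.1 0) - C| ≤ ∑ a ∈ T, |s a - C| :=
    Finset.single_le_sum (f := fun a => |s a - C|) (fun a _ => abs_nonneg _) hx
  linarith [hf x, neg_abs_le (s (x.1 0) - C)]

theorem le_birkhoff_of_forall_ne {c : ℝ} (hc : 0 ≤ c) {n i : ℕ} (hi : i < n) {x : MarkovShift A}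
    (h : ∀ j < n, j ≠ i → -c ≤ f (shift^[j] x)) : f (shift^[i] x) - n * c ≤ birkhoff f n x := by
  have hsplit : f (shift^[i] x) + ∑ j ∈ (Finset.range n).erase i, f (shift^[j] x)
      = birkhoff f n x :=
    Finset.add_sum_erase _ (fun j => f (shift^[j] x)) (Finset.mem_range.2 hi)
  have hrest : ((Finset.range n).erase i).card • -c
      ≤ ∑ j ∈ (Finset.range n).erase i, f (shift^[j] x) :=
    Finset.card_nsmul_le_sum _ _ _ fun j hj =>
      h j (Finset.mem_range.1 (Finset.mem_of_mem_erase hj)) (Finset.ne_of_mem_erase hj)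
  have hcard : (((Finset.range n).erase i).card : ℝ) ≤ n := by
    exact_mod_cast (Finset.card_erase_le).trans_eq (Finset.card_range n)
  rw [nsmul_eq_mul] at hrest
  nlinarith

theorem summable_exp_symbolSup (hbip : IsConnectedVia A K F)
    (hC : ∀ x y : MarkovShift A, x.1 0 = y.1 0 → |f x - f y| ≤ C) {p : ℝ}
    (hP : HasGurevichPressure f p) [Nonempty (MarkovShift A)] :
    Summable fun a => Real.exp (symbolSup f a) := by
  let x₀ := Classical.arbitrary (MarkovShift A)
  set n := 2 * K + 2
  obtain ⟨c, hc0, hc⟩ := exists_forall_mem_finset_neg_le (fun x => (le_symbolSup_and_le hC x).2)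
    (insert (x₀.1 0) F)
  have hpoint : ∀ a : {a // Admissible A a}, ∃ x : MarkovShift A,
      (shift^[n] x = x ∧ x.1 0 = x₀.1 0) ∧ x.1 (K + 1) = a ∧
        symbolSup f a ≤ C + n * c + birkhoff f n x := by
    rintro ⟨_, y, rfl⟩
    obtain ⟨x, hx, hxK, hxF⟩ := hbip.exists_periodic x₀ y
    refine ⟨x, hx, hxK, ?_⟩
    have hlow := le_birkhoff_of_forall_ne hc0 (show K + 1 < n by omega) fun j hj hne =>
      hc (shift^[j] x) (by rw [shift_iterate_coord, add_zero]; exact hxF j hj hne)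
    have hsup := (le_symbolSup_and_le hC (shift^[K + 1] x)).2
    rw [shift_iterate_coord, add_zero, hxK] at hsup
    linarith
  choose X hX hXK hXle using hpoint
  have hadm : Summable fun a : {a // Admissible A a} => Real.exp (symbolSup f a) := by
    have hinj : Function.Injective fun a => (⟨X a, hX a⟩ :
        {x : MarkovShift A // shift^[n] x = x ∧ x.1 0 = x₀.1 0}) := fun a b hab => by
      have hXab : X a = X b := congrArg Subtype.val hab
      rw [Subtype.ext_iff, ← hXK a, ← hXK b, hXab]
    refine .of_nonneg_of_le (fun _ => (Real.exp_pos _).le) (fun a => ?_)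
      ((((hP (x₀.1 0) ⟨x₀, rfl⟩).1 n (by omega)).comp_injective hinj).mul_left
        (Real.exp (C + n * c)))
    rw [Function.comp_apply, ← Real.exp_add]
    exact Real.exp_le_exp.2 (hXle a)
  refine summable_subtype_and_compl (s := {a | Admissible A a}).1 ⟨hadm, ?_⟩
  refine (Real.summable_exp_neg_nat.subtype _).congr fun a => ?_
  exact congrArg Real.exp (if_neg (c := Admissible A a) a.2).symm

theorem SatisfiesWalters.isControlled (hW : SatisfiesWalters f) (hbip : IsConnectedVia A K F)
    (hC : ∀ x y : MarkovShift A, x.1 0 = y.1 0 → |f x - f y| ≤ C) {p : ℝ}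
    (hP : HasGurevichPressure f p) [Nonempty (MarkovShift A)] :
    IsControlled f (symbolSup f) C (waltersSup f) where
  le_symbol x := (le_symbolSup_and_le hC x).1
  symbol_le x := (le_symbolSup_and_le hC x).2
  summable_exp := summable_exp_symbolSup hbip hC hP
  abs_birkhoff_sub_le := hW.abs_birkhoff_sub_le
  tendsto_modulus := hW.2

theorem Var1Finite.exists_forall_abs_sub_le (h : Var1Finite f) :
    ∃ C, ∀ x y : MarkovShift A, x.1 0 = y.1 0 → |f x - f y| ≤ C := by
  obtain ⟨C, hC⟩ := h
  refine ⟨C, fun x y hxy => hC ⟨x, y, fun i hi => ?_, ?_⟩⟩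
  · rwa [Nat.lt_one_iff.1 hi]
  · rw [birkhoff_one, birkhoff_one]

end Control

/-! ### The transfer operator -/

section Transfer

variable {A : ℕ → ℕ → Bool} {f : MarkovShift A → ℝ} {s : ℕ → ℝ} {ν : Measure (MarkovShift A)}
  {c : ℝ≥0∞}

/-- The `n`-th iterate of the transfer operator `ruelle f`, acting on `[0, ∞]`-valued functions so
that no summability has to be assumed. -/
noncomputable def transfer (f : MarkovShift A → ℝ) (n : ℕ) (u : MarkovShift A → ℝ≥0∞)
    (x : MarkovShift A) : ℝ≥0∞ :=
  ∑' y : {y : MarkovShift A // shift^[n] y = x},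
    ENNReal.ofReal (Real.exp (birkhoff f n y.1)) * u y.1

theorem transfer_mono (f : MarkovShift A → ℝ) (n : ℕ) {u v : MarkovShift A → ℝ≥0∞}
    (h : ∀ x, u x ≤ v x) (x : MarkovShift A) : transfer f n u x ≤ transfer f n v x :=
  ENNReal.tsum_le_tsum fun _ => mul_le_mul_right (h _) _

theorem transfer_const_mul (f : MarkovShift A → ℝ) (n : ℕ) (u : MarkovShift A → ℝ≥0∞) (c : ℝ≥0∞)
    (x : MarkovShift A) : transfer f n (fun y => c * u y) x = c * transfer f n u x := by
  rw [transfer, transfer, ← ENNReal.tsum_mul_left]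
  exact tsum_congr fun y => mul_left_comm _ _ _

theorem transfer_zero (f : MarkovShift A → ℝ) (u : MarkovShift A → ℝ≥0∞) :
    transfer f 0 u = u := by
  ext x
  refine (tsum_eq_single ⟨x, rfl⟩ fun y hne => absurd (Subtype.ext y.2) hne).trans ?_
  rw [birkhoff_zero, Real.exp_zero, ENNReal.ofReal_one, one_mul]

theorem transfer_add (f : MarkovShift A → ℝ) (n m : ℕ) (u : MarkovShift A → ℝ≥0∞) :
    transfer f (n + m) u = transfer f n (transfer f m u) := by
  ext x
  let e := Equiv.sigmaSubtypeFiberEquivSubtype (shift^[m] : MarkovShift A → MarkovShift A)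
    (p := fun y => shift^[n + m] y = x) (q := fun w => shift^[n] w = x)
    fun y => by rw [Function.iterate_add_apply]
  rw [transfer, ← e.tsum_eq, ENNReal.tsum_sigma', transfer]
  refine tsum_congr fun w => ?_
  rw [transfer, ← ENNReal.tsum_mul_left]
  refine tsum_congr fun y => ?_
  change ENNReal.ofReal (Real.exp (birkhoff f (n + m) y.1)) * u y.1 = _
  rw [add_comm n m, birkhoff_add, y.2, Real.exp_add, ENNReal.ofReal_mul (Real.exp_pos _).le]
  ring

/-- The weight `e^{f(ax)}` of the inverse branch `x ↦ ax`, and `0` where `ax` is not admissible. -/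
noncomputable def branchWeight (f : MarkovShift A → ℝ) (a : ℕ) (x : MarkovShift A) : ℝ≥0∞ :=
  if A a (x.1 0) = true then ENNReal.ofReal (Real.exp (f (cons a x))) else 0

theorem transfer_one_eq_tsum (f : MarkovShift A → ℝ) (u : MarkovShift A → ℝ≥0∞)
    (x : MarkovShift A) : transfer f 1 u x = ∑' a, branchWeight f a x * u (cons a x) := by
  have admissible (y : {y : MarkovShift A // shift^[1] y = x}) : A (y.1.1 0) (x.1 0) = true :=
    Eq.subst (motive := fun z => A (y.1.1 0) (z.1 0) = true) y.2 (y.1.2 0)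
  let e : {a : ℕ // A a (x.1 0) = true} ≃ {y : MarkovShift A // shift^[1] y = x} :=
    { toFun := fun a => ⟨cons a.1 x, shift_cons a.2⟩
      invFun := fun y => ⟨y.1.1 0, admissible y⟩
      left_inv := fun a => Subtype.ext (cons_zero a.2)
      right_inv := fun y => Subtype.ext ((congrArg (cons _) y.2.symm).trans (cons_shift y.1)) }
  rw [transfer, ← e.tsum_eq]
  refine (tsum_subtype {a : ℕ | A a (x.1 0) = true} fun a =>
    ENNReal.ofReal (Real.exp (birkhoff f 1 (cons a x))) * u (cons a x)).trans ?_
  refine tsum_congr fun a => ?_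
  simp only [Set.indicator_apply, Set.mem_ofPred_eq, branchWeight, ite_mul, zero_mul, birkhoff_one]

theorem measurable_branchWeight (hf : Measurable f) (a : ℕ) : Measurable (branchWeight f a) :=
  Measurable.ite (isClopen_setOf_coord (fun b => A a b = true) 0).isOpen.measurableSet
    (Real.measurable_exp.comp (hf.comp (continuous_cons a).measurable)).ennreal_ofReal
    measurable_const

theorem branchWeight_le (hs : ∀ x, f x ≤ s (x.1 0)) (a : ℕ) (x : MarkovShift A) :
    branchWeight f a x ≤ ENNReal.ofReal (Real.exp (s a)) := by
  unfold branchWeight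
  split_ifs with ha
  · have := hs (cons a x)
    rw [cons_zero ha] at this
    exact ENNReal.ofReal_le_ofReal (Real.exp_le_exp.2 this)
  · exact zero_le

theorem measurable_transfer (hf : Measurable f) {u : MarkovShift A → ℝ≥0∞} (hu : Measurable u)
    (n : ℕ) : Measurable (transfer f n u) := by
  induction n with
  | zero => rwa [transfer_zero]
  | succ n ih =>
    rw [add_comm, transfer_add, funext (transfer_one_eq_tsum f _)]
    exact Measurable.tsum fun a =>
      (measurable_branchWeight hf a).mul (ih.comp (continuous_cons a).measurable)

theorem ruelle_eq_toReal_transfer {u : MarkovShift A → ℝ} (hu : ∀ x, 0 ≤ u x)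
    (x : MarkovShift A) :
    ruelle f u x = (transfer f 1 (fun y => ENNReal.ofReal (u y)) x).toReal := by
  rw [transfer, ENNReal.tsum_toReal_eq fun y =>
    ENNReal.mul_ne_top ENNReal.ofReal_ne_top ENNReal.ofReal_ne_top]
  refine tsum_congr fun y => ?_
  rw [birkhoff_one, ENNReal.toReal_mul, ENNReal.toReal_ofReal (Real.exp_pos _).le,
    ENNReal.toReal_ofReal (hu _)]

theorem transfer_one_le (hs : ∀ x, f x ≤ s (x.1 0)) (hsum : Summable fun a => Real.exp (s a))
    {u : MarkovShift A → ℝ≥0∞} (hu : ∀ x, u x ≤ c) (x : MarkovShift A) :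
    transfer f 1 u x ≤ ENNReal.ofReal (∑' a, Real.exp (s a)) * c := by
  rw [transfer_one_eq_tsum, ENNReal.ofReal_tsum_of_nonneg (fun a => (Real.exp_pos _).le) hsum,
    ← ENNReal.tsum_mul_right]
  exact ENNReal.tsum_le_tsum fun a => mul_le_mul' (branchWeight_le hs a x) (hu _)

/-- `ν` is an eigenmeasure, with eigenvalue `c`, of the dual of the transfer operator of `f`. -/
def IsConformal (f : MarkovShift A → ℝ) (c : ℝ≥0∞) (ν : Measure (MarkovShift A)) : Prop :=
  ∀ u : MarkovShift A → ℝ≥0∞, Measurable u → ∫⁻ x, transfer f 1 u x ∂ν = c * ∫⁻ x, u x ∂ν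

theorem IsConformal.lintegral_transfer (h : IsConformal f c ν) (hf : Measurable f) (n : ℕ)
    {u : MarkovShift A → ℝ≥0∞} (hu : Measurable u) :
    ∫⁻ x, transfer f n u x ∂ν = c ^ n * ∫⁻ x, u x ∂ν := by
  induction n with
  | zero => rw [transfer_zero, pow_zero, one_mul]
  | succ n ih => rw [add_comm, transfer_add, h _ (measurable_transfer hf hu n), ih, pow_add,
      pow_one, mul_assoc]

/-- The image of `ν` under the dual of the transfer operator. -/
noncomputable def dualTransfer (f : MarkovShift A → ℝ) (ν : Measure (MarkovShift A)) :
    Measure (MarkovShift A) :=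
  Measure.sum fun a => (ν.withDensity (branchWeight f a)).map (cons a)

theorem lintegral_dualTransfer (hf : Measurable f) (ν : Measure (MarkovShift A))
    {u : MarkovShift A → ℝ≥0∞} (hu : Measurable u) :
    ∫⁻ x, u x ∂dualTransfer f ν = ∫⁻ x, transfer f 1 u x ∂ν := by
  have hcons (a : ℕ) : Measurable fun x => u (cons a x) := hu.comp (continuous_cons a).measurable
  simp only [transfer_one_eq_tsum]
  have hterm (a : ℕ) : Measurable fun x => branchWeight f a x * u (cons a x) :=
    (measurable_branchWeight hf a).mul (hcons a)
  rw [lintegral_tsum fun a => (hterm a).aemeasurable, dualTransfer, lintegral_sum_measure]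
  refine tsum_congr fun a => ?_
  rw [lintegral_map hu (continuous_cons a).measurable]
  exact lintegral_withDensity_eq_lintegral_mul _ (measurable_branchWeight hf a) (hcons a)

theorem isConformal_of_integral_ruelle [IsFiniteMeasure ν] (hf : Measurable f)
    (hs : ∀ x, f x ≤ s (x.1 0)) (hsum : Summable fun a => Real.exp (s a)) {p : ℝ}
    (hν : ∀ g : MarkovShift A → ℝ, Continuous g → BoundedFun g →
      ∫ x, ruelle f g x ∂ν = Real.exp p * ∫ x, g x ∂ν) :
    IsConformal f (ENNReal.ofReal (Real.exp p)) ν := by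
  have transfer_lt_top {u : MarkovShift A → ℝ≥0∞} {b : NNReal} (hu : ∀ x, u x ≤ b)
      (x : MarkovShift A) : transfer f 1 u x < ⊤ :=
    (transfer_one_le hs hsum hu x).trans_lt
      (ENNReal.mul_lt_top ENNReal.ofReal_lt_top ENNReal.coe_lt_top)
  have lintegral_transfer_ne_top {u : MarkovShift A → ℝ≥0∞} {b : NNReal} (hu : ∀ x, u x ≤ b) :
      ∫⁻ x, transfer f 1 u x ∂ν ≠ ⊤ :=
    ((lintegral_mono (transfer_one_le hs hsum hu)).trans_lt (lintegral_const_lt_top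
      (ENNReal.mul_ne_top ENNReal.ofReal_ne_top ENNReal.coe_ne_top))).ne
  have : IsFiniteMeasure (dualTransfer f ν) := ⟨by
    rw [← lintegral_one, lintegral_dualTransfer hf ν measurable_const]
    exact (lintegral_transfer_ne_top (b := 1) fun _ => ENNReal.coe_one.ge).lt_top⟩
  have : IsFiniteMeasure (ENNReal.ofReal (Real.exp p) • ν) :=
    Measure.smul_finite _ ENNReal.ofReal_ne_top
  have dual_eq : dualTransfer f ν = ENNReal.ofReal (Real.exp p) • ν := by
    refine ext_of_forall_lintegral_eq_of_IsFiniteMeasure fun g => ?_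
    have hg : Measurable fun x => (g x : ℝ≥0∞) := g.continuous.measurable.coe_nnreal_ennreal
    have hgb (x : MarkovShift A) : (g x : ℝ≥0∞) ≤ nndist g 0 :=
      ENNReal.coe_le_coe.2 (BoundedContinuousFunction.NNReal.upper_bound g x)
    have hint := hν (fun x => (g x : ℝ)) (NNReal.continuous_coe.comp g.continuous)
      ⟨nndist g 0, fun x => by
        rw [NNReal.abs_eq]
        exact BoundedContinuousFunction.NNReal.upper_bound g x⟩
    simp only [ruelle_eq_toReal_transfer fun x => NNReal.coe_nonneg (g x),
      ENNReal.ofReal_coe_nnreal] at hint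
    rw [integral_toReal (measurable_transfer hf hg 1).aemeasurable
      (ae_of_all _ (transfer_lt_top hgb))] at hint
    rw [show ∫ x, (g x : ℝ) ∂ν = (∫⁻ x, (g x : ℝ≥0∞) ∂ν).toReal from
      integral_toReal hg.aemeasurable (ae_of_all _ fun x => ENNReal.coe_lt_top)] at hint
    rw [lintegral_dualTransfer hf ν hg, lintegral_smul_measure, smul_eq_mul,
      ← ENNReal.ofReal_toReal (lintegral_transfer_ne_top hgb), hint,
      ENNReal.ofReal_mul (Real.exp_pos p).le, ENNReal.ofReal_toReal
      ((lintegral_mono hgb).trans_lt (lintegral_const_lt_top ENNReal.coe_ne_top)).ne]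
  intro u hu
  rw [← lintegral_dualTransfer hf ν hu, dual_eq, lintegral_smul_measure, smul_eq_mul]

end Transfer

/-! ### Regularity of eigenfunctions -/

section Eigenfunction

variable {A : ℕ → ℕ → Bool} {K : ℕ} {F : Finset ℕ} {f : MarkovShift A → ℝ} {s : ℕ → ℝ} {C : ℝ}
  {M : ℕ → ℝ} {ν : Measure (MarkovShift A)} {c : ℝ≥0∞}

theorem transfer_le_mul_of_fiber_map {n m : ℕ} {u v : MarkovShift A → ℝ≥0∞} {x y : MarkovShift A}
    (φ : MarkovShift A → MarkovShift A) (hφ : ∀ z, shift^[n] z = x → shift^[m] (φ z) = y)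
    (hinj : Set.InjOn φ {z | shift^[n] z = x})
    (hle : ∀ z, shift^[n] z = x → ENNReal.ofReal (Real.exp (birkhoff f n z)) * u z ≤
      c * (ENNReal.ofReal (Real.exp (birkhoff f m (φ z))) * v (φ z))) :
    transfer f n u x ≤ c * transfer f m v y := by
  let ψ (z : {z : MarkovShift A // shift^[n] z = x}) : {z : MarkovShift A // shift^[m] z = y} :=
    ⟨φ z.1, hφ z.1 z.2⟩
  have hψ : Function.Injective ψ := fun z z' h =>
    Subtype.ext (hinj z.2 z'.2 (congrArg Subtype.val h))
  calc transfer f n u x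
      ≤ ∑' z, c * (ENNReal.ofReal (Real.exp (birkhoff f m (ψ z).1)) * v (ψ z).1) :=
        ENNReal.tsum_le_tsum fun z => hle z.1 z.2
    _ = c * ∑' z, ENNReal.ofReal (Real.exp (birkhoff f m (ψ z).1)) * v (ψ z).1 :=
        ENNReal.tsum_mul_left
    _ ≤ c * transfer f m v y := mul_le_mul_right (ENNReal.tsum_comp_le_tsum_of_injective hψ
        fun z => ENNReal.ofReal (Real.exp (birkhoff f m z.1)) * v z.1) _

theorem ofReal_exp_le_mul {a b d : ℝ} (h : a ≤ d + b) :
    ENNReal.ofReal (Real.exp a) ≤ ENNReal.ofReal (Real.exp d) * ENNReal.ofReal (Real.exp b) := by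
  rw [← ENNReal.ofReal_mul (Real.exp_pos d).le, ← Real.exp_add]
  exact ENNReal.ofReal_le_ofReal (Real.exp_le_exp.2 h)

theorem IsControlled.transfer_le_of_mem_cylOf (hf : IsControlled f s C M) {n k : ℕ} (hk : 1 ≤ k)
    {u : MarkovShift A → ℝ≥0∞} (hu : ∀ z, ∀ z' ∈ cylOf z n, u z ≤ u z') {x y : MarkovShift A}
    (hxy : y ∈ cylOf x k) :
    transfer f n u x ≤ ENNReal.ofReal (Real.exp (M k)) * transfer f n u y := by
  have hy (z) (hz : shift^[n] z = x) : y ∈ cylOf (shift^[n] z) k := hz ▸ hxy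
  have hy0 (z) (hz : shift^[n] z = x) := coord_zero_eq_of_mem_cylOf hk (hy z hz)
  refine transfer_le_mul_of_fiber_map (fun z => glue z n y)
    (fun z hz => shift_iterate_glue (hy0 z hz)) (fun z hz z' hz' heq => ext_coord fun i => ?_)
    fun z hz => ?_
  · rcases lt_or_ge i n with hi | hi
    · rw [← glue_coord_of_lt (hy0 z hz) hi, ← glue_coord_of_lt (hy0 z' hz') hi]
      exact congrArg (fun w : MarkovShift A => w.1 i) heq
    · obtain ⟨j, rfl⟩ := Nat.exists_eq_add_of_le hi
      rw [← shift_iterate_coord, ← shift_iterate_coord, hz, hz']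
  · have hmem := glue_mem_cylOf hk (hy z hz)
    rw [← mul_assoc]
    refine mul_le_mul' (ofReal_exp_le_mul ?_) (hu z _ fun i hi => hmem i (by omega))
    linarith [neg_le_of_abs_le (hf.abs_birkhoff_sub_le n k hk _ z hmem)]

theorem IsConformal.measure_cylOf_pos [NeZero ν] (hν : IsConformal f c ν) (hf : Measurable f)
    (hconn : IsConnectedVia A K F) (y : MarkovShift A) (n : ℕ) : 0 < ν (cylOf y n) := by
  have hmeas := (isClopen_cylOf y n).isOpen.measurableSet
  let u : MarkovShift A → ℝ≥0∞ := (cylOf y n).indicator 1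
  have hu : Measurable u := measurable_one.indicator hmeas
  refine pos_iff_ne_zero.2 fun h0 =>
    NeZero.ne ν (ae_eq_bot.1 (Filter.eventually_false_iff_eq_bot.1 ?_))
  have hint := hν.lintegral_transfer hf (K + 1 + n) hu
  rw [lintegral_indicator_one hmeas, h0, mul_zero,
    lintegral_eq_zero_iff (measurable_transfer hf hu _)] at hint
  filter_upwards [hint] with x hx
  obtain ⟨z, hz, hzx⟩ := hconn.exists_mem_cylOf y x n
  have hterm := ENNReal.tsum_eq_zero.1 hx ⟨z, hzx⟩
  have hzn : z ∈ cylOf y n := fun i hi => hz i (hi.trans n.lt_succ_self)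
  have huz : u z = 1 := Set.indicator_of_mem hzn 1
  rw [huz, mul_one, ENNReal.ofReal_eq_zero] at hterm
  exact hterm.not_gt (Real.exp_pos _)

theorem IsConformal.isOpenPosMeasure [NeZero ν] (hν : IsConformal f c ν) (hf : Measurable f)
    (hconn : IsConnectedVia A K F) : ν.IsOpenPosMeasure := by
  refine ⟨fun U hU ⟨x, hx⟩ h0 => ?_⟩
  obtain ⟨n, hn⟩ := exists_cylOf_subset (hU.mem_nhds hx)
  exact (hν.measure_cylOf_pos hf hconn x n).ne' (measure_mono_null hn h0)

/-- The largest function below `u` that depends only on the first `n` coordinates. -/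
noncomputable def cylInf (u : MarkovShift A → ℝ≥0∞) (n : ℕ) (x : MarkovShift A) : ℝ≥0∞ :=
  ⨅ y ∈ cylOf x n, u y

theorem cylInf_eq_of_mem {u : MarkovShift A → ℝ≥0∞} {n : ℕ} {x y : MarkovShift A}
    (h : y ∈ cylOf x n) : cylInf u n y = cylInf u n x := by
  rw [cylInf, cylOf_eq_of_mem h, cylInf]

theorem cylInf_le (u : MarkovShift A → ℝ≥0∞) (n : ℕ) (x : MarkovShift A) : cylInf u n x ≤ u x :=
  iInf₂_le x (self_mem_cylOf x n)

theorem monotone_cylInf (u : MarkovShift A → ℝ≥0∞) : Monotone (cylInf u) := fun _ _ hmn _ =>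
  biInf_mono fun _ hy i hi => hy i (hi.trans_le hmn)

theorem measurable_cylInf (u : MarkovShift A → ℝ≥0∞) (n : ℕ) : Measurable (cylInf u n) :=
  ((IsLocallyConstant.iff_eventually_eq _).2 fun x => by
    filter_upwards [cylOf_mem_nhds x n] with y hy
    exact cylInf_eq_of_mem hy).continuous.measurable

theorem iSup_cylInf {u : MarkovShift A → ℝ≥0∞} (hu : Continuous u) (x : MarkovShift A) :
    ⨆ n, cylInf u n x = u x := by
  refine le_antisymm (iSup_le fun n => cylInf_le u n x) (le_of_forall_lt fun b hb => ?_)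
  obtain ⟨b', hbb', hb'⟩ := exists_between hb
  obtain ⟨n, hn⟩ := exists_cylOf_subset (hu.continuousAt.eventually (lt_mem_nhds hb'))
  exact hbb'.trans_le ((le_iInf₂ fun y hy => (hn hy).le).trans (le_iSup (cylInf u · x) n))

theorem transfer_eigen {u : MarkovShift A → ℝ≥0∞} (hu : ∀ x, transfer f 1 u x = c * u x) (n : ℕ)
    (x : MarkovShift A) : transfer f n u x = c ^ n * u x := by
  induction n generalizing x with
  | zero => rw [transfer_zero, pow_zero, one_mul]
  | succ n ih =>
    rw [transfer_add, funext hu, transfer_const_mul, ih, pow_succ', mul_assoc]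

/-- An eigenfunction is the supremum of the normalized iterates of its locally constant minorants,
and these inherit the distortion bound of the Birkhoff sums. -/
theorem IsControlled.ae_eq_iSup_transfer_cylInf (hf : IsControlled f s C M)
    {u : MarkovShift A → ℝ≥0∞} (hu : Continuous u) (heig : ∀ x, transfer f 1 u x = c * u x)
    (hc : c ≠ 0) (hc' : c ≠ ⊤) (hν : IsConformal f c ν) (hfin : ∫⁻ x, u x ∂ν ≠ ⊤) :
    (fun x => ⨆ n, (c ^ n)⁻¹ * transfer f n (cylInf u n) x) =ᵐ[ν] u := by
  have hcancel (n : ℕ) (b : ℝ≥0∞) : (c ^ n)⁻¹ * (c ^ n * b) = b :=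
    ENNReal.inv_mul_cancel_left (pow_ne_zero n hc) (ENNReal.pow_ne_top hc')
  have hfm := hf.continuous.measurable
  have hle (n : ℕ) (x : MarkovShift A) : (c ^ n)⁻¹ * transfer f n (cylInf u n) x ≤ u x := by
    rw [← hcancel n (u x), ← transfer_eigen heig]
    exact mul_le_mul_right (transfer_mono f n (cylInf_le u n) x) _
  refine ae_eq_of_ae_le_of_lintegral_le (ae_of_all _ fun x => iSup_le fun n => hle n x)
    ((lintegral_mono fun x => iSup_le fun n => hle n x).trans_lt hfin.lt_top).ne
    hu.measurable.aemeasurable ?_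
  calc ∫⁻ x, u x ∂ν = ∫⁻ x, ⨆ n, cylInf u n x ∂ν := by simp only [iSup_cylInf hu]
    _ = ⨆ n, ∫⁻ x, cylInf u n x ∂ν := lintegral_iSup (measurable_cylInf u) (monotone_cylInf u)
    _ ≤ ∫⁻ x, ⨆ n, (c ^ n)⁻¹ * transfer f n (cylInf u n) x ∂ν := iSup_le fun n => by
        rw [← hcancel n (∫⁻ x, cylInf u n x ∂ν), ← hν.lintegral_transfer hfm n
          (measurable_cylInf u n), ← lintegral_const_mul _ (measurable_transfer hfm
          (measurable_cylInf u n) n)]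
        exact lintegral_mono fun x => le_iSup (fun n => (c ^ n)⁻¹ * transfer f n (cylInf u n) x) n

theorem IsControlled.eigenfunction_le_of_mem_cylOf (hf : IsControlled f s C M)
    {u : MarkovShift A → ℝ≥0∞} (hu : Continuous u) (heig : ∀ x, transfer f 1 u x = c * u x)
    (hc : c ≠ 0) (hc' : c ≠ ⊤) (hν : IsConformal f c ν) [ν.IsOpenPosMeasure]
    (hfin : ∫⁻ x, u x ∂ν ≠ ⊤) {k : ℕ} (hk : 1 ≤ k) {x y : MarkovShift A} (hxy : y ∈ cylOf x k) :
    u x ≤ ENNReal.ofReal (Real.exp (M k)) * u y := by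
  let v (x : MarkovShift A) : ℝ≥0∞ := ⨆ n, (c ^ n)⁻¹ * transfer f n (cylInf u n) x
  have hv : v =ᵐ[ν] u := hf.ae_eq_iSup_transfer_cylInf hu heig hc hc' hν hfin
  have hvy : v y ≤ u y := iSup_le fun n => by
    rw [← ENNReal.inv_mul_cancel_left (pow_ne_zero n hc) (ENNReal.pow_ne_top hc') (b := u y),
      ← transfer_eigen heig]
    exact mul_le_mul_right (transfer_mono f n (cylInf_le u n) y) _
  have hclosed : IsClosed {z | u z ≤ ENNReal.ofReal (Real.exp (M k)) * u y} :=
    isClosed_le hu continuous_const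
  have hdense := (Measure.dense_of_ae hv).open_subset_closure_inter (isClopen_cylOf x k).isOpen
  refine hclosed.closure_subset_iff.2 ?_ (hdense (self_mem_cylOf x k))
  rintro z ⟨hzx, hz : v z = u z⟩
  change u z ≤ _
  rw [← hz]
  refine (iSup_le fun n => ?_).trans (mul_le_mul_right hvy _)
  have hzy : y ∈ cylOf z k := cylOf_eq_of_mem hzx ▸ hxy
  calc (c ^ n)⁻¹ * transfer f n (cylInf u n) z
      ≤ (c ^ n)⁻¹ * (ENNReal.ofReal (Real.exp (M k)) * transfer f n (cylInf u n) y) :=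
        mul_le_mul_right (hf.transfer_le_of_mem_cylOf hk
          (fun w w' hw => (cylInf_eq_of_mem hw).ge) hzy) _
    _ = ENNReal.ofReal (Real.exp (M k)) * ((c ^ n)⁻¹ * transfer f n (cylInf u n) y) :=
        mul_left_comm _ _ _
    _ ≤ ENNReal.ofReal (Real.exp (M k)) * v y :=
        mul_le_mul_right (le_iSup (fun n => (c ^ n)⁻¹ * transfer f n (cylInf u n) y) n) _

theorem IsControlled.transfer_one_le_of_isConnectedVia (hf : IsControlled f s C M)
    (hconn : IsConnectedVia A K F) {b d : ℝ} (hb : ∀ x : MarkovShift A, x.1 0 ∈ F → -b ≤ f x)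
    {u : MarkovShift A → ℝ≥0∞}
    (hu : ∀ x y : MarkovShift A, x.1 0 = y.1 0 → u x ≤ ENNReal.ofReal (Real.exp d) * u y)
    (x y : MarkovShift A) :
    transfer f 1 u x ≤ ENNReal.ofReal (Real.exp (C + K * b + d)) * transfer f (K + 1) u y := by
  choose φ hφ0 hφ hφF using fun z => hconn z y
  refine transfer_le_mul_of_fiber_map φ (fun z _ => hφ z) (fun z hz z' hz' heq => ?_)
    fun z _ => ?_
  · rw [← cons_shift z, ← cons_shift z', ← hφ0 z, ← hφ0 z', heq, show shift z = x from hz,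
      show shift z' = x from hz']
  · have hsum : -(K * b) ≤ birkhoff f K (shift (φ z)) := by
      have := Finset.card_nsmul_le_sum (Finset.range K) (fun j => f (shift^[j] (shift (φ z)))) (-b)
        fun j hj => hb _ (by
          rw [← Function.iterate_succ_apply, shift_iterate_coord]
          exact hφF z j (Finset.mem_range.1 hj))
      rwa [Finset.card_range, nsmul_eq_mul, mul_neg] at this
    have hfirst : f z - C ≤ f (φ z) := by
      have := hf.symbol_le (φ z)
      rw [hφ0] at this
      linarith [hf.le_symbol z]
    calc ENNReal.ofReal (Real.exp (birkhoff f 1 z)) * u z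
        ≤ (ENNReal.ofReal (Real.exp (C + K * b)) *
            ENNReal.ofReal (Real.exp (birkhoff f (K + 1) (φ z)))) *
            (ENNReal.ofReal (Real.exp d) * u (φ z)) := by
          refine mul_le_mul' (ofReal_exp_le_mul ?_) (hu z (φ z) (hφ0 z).symm)
          rw [birkhoff_one, birkhoff_succ']
          linarith
      _ = _ := by
          rw [Real.exp_add _ d, ENNReal.ofReal_mul (Real.exp_pos _).le]
          ring

end Eigenfunction

/-! ### Sub-actions -/

section InvariantMeasure

variable {E : Type*} [TopologicalSpace E] [MeasurableSpace E]

/-- The uniform measure on the first `n + 1` points of the orbit of `x`. -/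
noncomputable def empiricalMeasure (T : E → E) (x : E) (n : ℕ) : Measure E :=
  ((n + 1 : ℕ) : ℝ≥0∞)⁻¹ • ∑ j ∈ Finset.range (n + 1), Measure.dirac (T^[j] x)

instance isProbabilityMeasure_empiricalMeasure (T : E → E) (x : E) (n : ℕ) :
    IsProbabilityMeasure (empiricalMeasure T x n) := ⟨by
  simp only [empiricalMeasure, Measure.smul_apply, Measure.finsetSum_apply, measure_univ,
    Finset.sum_const, Finset.card_range, nsmul_eq_mul, mul_one, smul_eq_mul]
  exact ENNReal.inv_mul_cancel (Nat.cast_ne_zero.2 n.succ_ne_zero) (ENNReal.natCast_ne_top _)⟩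

theorem integral_empiricalMeasure [OpensMeasurableSpace E] (T : E → E) (x : E) (n : ℕ)
    (g : BoundedContinuousFunction E ℝ) :
    ∫ y, g y ∂empiricalMeasure T x n = birkhoffAverage ℝ T g (n + 1) x := by
  rw [empiricalMeasure, integral_smul_measure,
    integral_finsetSum_measure fun _ _ => g.integrable _, ENNReal.toReal_inv,
    ENNReal.toReal_natCast, birkhoffAverage, birkhoffSum]
  congr 1
  exact Finset.sum_congr rfl fun j _ =>
    integral_dirac' _ _ g.continuous.measurable.stronglyMeasurable

/-- Krylov–Bogolyubov: a cluster point of the empirical measures is invariant. -/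
theorem exists_isProbabilityMeasure_map_eq [CompactSpace E] [TopologicalSpace.MetrizableSpace E]
    [BorelSpace E] [Nonempty E] {T : E → E} (hT : Continuous T) :
    ∃ μ : Measure E, IsProbabilityMeasure μ ∧ μ.map T = μ := by
  let x := Classical.arbitrary E
  let P (n : ℕ) : ProbabilityMeasure E := ⟨empiricalMeasure T x n, inferInstance⟩
  let U : Ultrafilter ℕ := Ultrafilter.of atTop
  obtain ⟨μ, -, hμ : Tendsto P U (𝓝 μ)⟩ :=
    isCompact_univ.ultrafilter_le_nhds (U.map P) (by rw [principal_univ]; exact le_top)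
  rw [ProbabilityMeasure.tendsto_iff_forall_integral_tendsto] at hμ
  have : IsProbabilityMeasure ((μ : Measure E).map T) :=
    Measure.isProbabilityMeasure_map hT.measurable.aemeasurable
  refine ⟨μ, inferInstance, ext_of_forall_integral_eq_of_IsFiniteMeasure fun g => ?_⟩
  rw [integral_map hT.measurable.aemeasurable g.continuous.aestronglyMeasurable]
  let gT : BoundedContinuousFunction E ℝ := g.compContinuous ⟨T, hT⟩
  have hdiff (n : ℕ) : ∫ y, gT y ∂empiricalMeasure T x n - ∫ y, g y ∂empiricalMeasure T x n =
      birkhoffAverage ℝ T g (n + 1) (T x) - birkhoffAverage ℝ T g (n + 1) x := by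
    rw [integral_empiricalMeasure, integral_empiricalMeasure, birkhoffAverage, birkhoffAverage,
      birkhoffSum, birkhoffSum]
    congr 2
    exact Finset.sum_congr rfl fun j _ => congrArg g (Function.Commute.self_iterate T j x)
  have hlim := ((tendsto_birkhoffAverage_apply_sub_birkhoffAverage' ℝ g.isBounded_range T x).comp
    (tendsto_add_atTop_nat 1)).mono_left (Ultrafilter.of_le atTop)
  exact sub_eq_zero.1 (tendsto_nhds_unique (((hμ gT).sub (hμ g)).congr hdiff) hlim)

end InvariantMeasure

section Subaction

variable {A : ℕ → ℕ → Bool} {f V W : MarkovShift A → ℝ} {s : ℕ → ℝ} {C m m' : ℝ} {M : ℕ → ℝ}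
  {μ : Measure (MarkovShift A)}

/-- A bounded sub-action for `f` whose defect is measured against the constant `m`, which need not
be `mf f`. -/
structure IsSubaction (f V : MarkovShift A → ℝ) (m : ℝ) : Prop where
  continuous : Continuous V
  bounded : BoundedFun V
  reduced_nonpos : ∀ x, reduced f V m x ≤ 0

/-- A sub-action for which every point has a preimage with vanishing defect. -/
structure IsCalibrated (f V : MarkovShift A → ℝ) (m : ℝ) : Prop extends IsSubaction f V m where
  exists_preimage : ∀ y, ∃ x, shift x = y ∧ reduced f V m x = 0

theorem IsCalibratedSubaction.isCalibrated (hV : IsCalibratedSubaction f V) :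
    IsCalibrated f V (mf f) :=
  ⟨⟨hV.1, hV.2.1, hV.2.2.1⟩, hV.2.2.2⟩

theorem continuous_reduced (hf : Continuous f) (hV : Continuous V) (m : ℝ) :
    Continuous (reduced f V m) :=
  ((hf.add hV).sub (hV.comp continuous_shift)).sub continuous_const

theorem IsCalibrated.exists_backward_orbit (hV : IsCalibrated f V m) (y : MarkovShift A) :
    ∃ z : ℕ → MarkovShift A, z 0 = y ∧ ∀ n, shift (z (n + 1)) = z n ∧
      reduced f V m (z (n + 1)) = 0 := by
  choose g hshift hzero using hV.exists_preimage
  refine ⟨fun n => g^[n] y, rfl, fun n => ?_⟩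
  simp only [Function.iterate_succ_apply']
  exact ⟨hshift _, hzero _⟩

theorem IsCalibrated.le_of_isSubaction [Nonempty (MarkovShift A)] (hV : IsCalibrated f V m)
    (hW : IsSubaction f W m') : m ≤ m' := by
  obtain ⟨z, -, hz⟩ := hV.exists_backward_orbit (Classical.arbitrary _)
  obtain ⟨B, hB⟩ := hV.bounded
  obtain ⟨B', hB'⟩ := hW.bounded
  have growth (n : ℕ) : n * (m - m') + (V (z 0) - W (z 0)) ≤ V (z n) - W (z n) := by
    induction n with
    | zero => rw [Nat.cast_zero, zero_mul, zero_add]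
    | succ n ih =>
      have hzero := (hz n).2
      have hnonpos := hW.reduced_nonpos (z (n + 1))
      rw [reduced, (hz n).1] at hzero hnonpos
      push_cast
      linarith
  by_contra! hlt
  obtain ⟨n, hn⟩ := exists_nat_gt ((2 * B + 2 * B') / (m - m'))
  rw [div_lt_iff₀ (sub_pos.2 hlt)] at hn
  linarith [growth n, abs_le.1 (hB (z 0)), abs_le.1 (hB (z n)), abs_le.1 (hB' (z 0)),
    abs_le.1 (hB' (z n))]

theorem IsSubaction.exists_finset_coord_mem (hf : IsControlled f s C M) (hV : IsSubaction f V m)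
    (c : ℝ) : ∃ Fs : Finset ℕ, ∀ x, -c ≤ reduced f V m x → x.1 0 ∈ Fs := by
  obtain ⟨B, hB⟩ := hV.bounded
  let L := m - c - 2 * B
  have hfin := Filter.eventually_cofinite.1
    (hf.summable_exp.tendsto_cofinite_zero.eventually (gt_mem_nhds (Real.exp_pos L)))
  refine ⟨hfin.toFinset, fun x hx => hfin.mem_toFinset.2 fun hlt => ?_⟩
  rw [reduced] at hx
  linarith [Real.exp_lt_exp.1 hlt, hf.le_symbol x, abs_le.1 (hB x), abs_le.1 (hB (shift x))]

theorem IsSubaction.isMaximizing_of_ae_reduced_eq_zero (hV : IsSubaction f V (mf f))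
    (hμ : IsInvariantProb μ) (hzero : ∀ᵐ x ∂μ, reduced f V (mf f) x = 0) : IsMaximizing f μ := by
  have := hμ.1
  obtain ⟨B, hB⟩ := hV.bounded
  have hf : f =ᵐ[μ] fun x => V (shift x) - V x + mf f := by
    filter_upwards [hzero] with x hx
    rw [reduced] at hx
    linarith
  have hVint : Integrable V μ :=
    .of_bound hV.continuous.aestronglyMeasurable B (ae_of_all _ hB)
  have hVshift : Integrable (fun x => V (shift x)) μ :=
    .of_bound (hV.continuous.comp continuous_shift).aestronglyMeasurable B
      (ae_of_all _ fun x => hB _)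
  have hinv : ∫ x, V (shift x) ∂μ = ∫ x, V x ∂μ := by
    conv_rhs => rw [← hμ.2]
    rw [integral_map continuous_shift.measurable.aemeasurable hV.continuous.aestronglyMeasurable]
  refine ⟨hμ, ((hVshift.sub hVint).add (integrable_const (mf f))).congr hf.symm, ?_⟩
  rw [integral_congr_ae hf, integral_add (f := fun x => V (shift x) - V x) (hVshift.sub hVint)
    (integrable_const _), integral_sub hVshift hVint, hinv, sub_self, zero_add, integral_const,
    probReal_univ, one_smul]

/-- The zero set of the defect is compact, so it carries an invariant measure as soon as it contains
a nonempty closed forward-invariant set. -/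
theorem IsSubaction.mem_ae_of_isClosed (hf : IsControlled f s C M) (hV : IsSubaction f V (mf f))
    (hμ : ∀ μ', IsMaximizing f μ' → μ' = μ) {Λ : Set (MarkovShift A)} (hclosed : IsClosed Λ)
    (hne : Λ.Nonempty) (hinv : Set.MapsTo shift Λ Λ) (hzero : ∀ x ∈ Λ, reduced f V (mf f) x = 0) :
    Λ ∈ ae μ := by
  obtain ⟨Fs, hFs⟩ := hV.exists_finset_coord_mem hf 0
  have hcompact : IsCompact Λ := by
    refine (isCompact_box (A := A) fun _ => Fs).of_isClosed_subset hclosed fun x hx i => ?_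
    have := hFs (shift^[i] x) (by rw [neg_zero, hzero _ (hinv.iterate i hx)])
    rwa [shift_iterate_coord] at this
  have : CompactSpace Λ := isCompact_iff_compactSpace.1 hcompact
  have : Nonempty Λ := hne.to_subtype
  let T : Λ → Λ := hinv.restrict
  have hT : Continuous T := continuous_shift.restrict hinv
  obtain ⟨κ, hκ, hκT⟩ := exists_isProbabilityMeasure_map_eq hT
  have hval : Measurable (Subtype.val : Λ → MarkovShift A) := measurable_subtype_coe
  have hfull : Λ ∈ ae (κ.map Subtype.val) := by
    rw [mem_ae_map_iff hval.aemeasurable hclosed.measurableSet]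
    exact Filter.univ_mem' Subtype.property
  have hprob : IsInvariantProb (κ.map Subtype.val) := by
    refine ⟨Measure.isProbabilityMeasure_map hval.aemeasurable, ?_⟩
    rw [Measure.map_map continuous_shift.measurable hval]
    conv_rhs => rw [← hκT, Measure.map_map hval hT.measurable]
    rfl
  rw [← hμ _ (hV.isMaximizing_of_ae_reduced_eq_zero hprob
    (Filter.mem_of_superset hfull hzero))]
  exact hfull

theorem IsSubaction.ae_mapClusterPt (hf : IsControlled f s C M) (hV : IsSubaction f V (mf f))
    (hμ : ∀ μ', IsMaximizing f μ' → μ' = μ) {z : ℕ → MarkovShift A} {F : ℕ → Finset ℕ}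
    (hz : ∀ n i, (z n).1 i ∈ F i) {t : ℕ → ℕ} (ht : Tendsto t atTop atTop)
    (hzt : ∀ᶠ n in atTop, shift (z n) = z (t n))
    (hzero : Tendsto (fun n => reduced f V (mf f) (z n)) atTop (𝓝 0)) :
    ∀ᵐ p ∂μ, MapClusterPt p atTop z := by
  refine hV.mem_ae_of_isClosed hf hμ isClosed_setOfPred_clusterPt ?_ (fun p hp => ?_)
    fun p hp => ?_
  · obtain ⟨p, -, hp⟩ := (isCompact_box (A := A) F).exists_mapClusterPt (f := atTop) (u := z)
      (Filter.tendsto_principal.2 (Eventually.of_forall hz))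
    exact ⟨p, hp⟩
  · obtain ⟨U, hU, hp⟩ := mapClusterPt_iff_ultrafilter.1 hp
    have himage : Tendsto (fun n => z (t n)) U (𝓝 (shift p)) :=
      ((continuous_shift.tendsto p).comp hp).congr' (hU hzt)
    exact mapClusterPt_iff_ultrafilter.2 ⟨U.map t, (Filter.map_mono hU).trans ht, himage⟩
  · obtain ⟨U, hU, hp⟩ := mapClusterPt_iff_ultrafilter.1 hp
    exact tendsto_nhds_unique
      (((continuous_reduced hf.continuous hV.continuous _).tendsto p).comp hp) (hzero.mono_left hU)

theorem IsCalibrated.ae_mapClusterPt_backward_orbit (hf : IsControlled f s C M)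
    (hV : IsCalibrated f V (mf f)) (hμ : ∀ μ', IsMaximizing f μ' → μ' = μ)
    {z : ℕ → MarkovShift A}
    (hz : ∀ n, shift (z (n + 1)) = z n ∧ reduced f V (mf f) (z (n + 1)) = 0) :
    ∀ᵐ p ∂μ, MapClusterPt p atTop z := by
  obtain ⟨Fs, hFs⟩ := hV.exists_finset_coord_mem hf 0
  have hcoord (n i : ℕ) : (z n).1 i ∈ Fs ∪ (Finset.range (i + 1)).image (z 0).1 := by
    induction n generalizing i with
    | zero =>
      exact Finset.mem_union_right _ (Finset.mem_image_of_mem _ (Finset.self_mem_range_succ i))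
    | succ n ih =>
      cases i with
      | zero => exact Finset.mem_union_left _ (hFs _ (by rw [(hz n).2, neg_zero]))
      | succ i =>
        have hshift : (z (n + 1)).1 (i + 1) = (z n).1 i := by rw [← (hz n).1]; rfl
        rw [hshift]
        exact Finset.union_subset_union le_rfl (Finset.image_subset_image
          (Finset.range_mono (Nat.le_succ _))) (ih i)
  refine hV.ae_mapClusterPt hf hμ hcoord (tendsto_sub_atTop_nat 1) ?_
    (tendsto_const_nhds.congr' ?_) <;>
  · filter_upwards [eventually_ge_atTop 1] with n hn
    obtain ⟨k, rfl⟩ := Nat.exists_eq_add_of_le' hn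
    first | exact (hz k).1 | exact (hz k).2.symm

theorem IsCalibrated.ae_sub_le (hf : IsControlled f s C M) (hV : IsCalibrated f V (mf f))
    (hμ : ∀ μ', IsMaximizing f μ' → μ' = μ) (hW : IsSubaction f W (mf f)) (y : MarkovShift A) :
    ∀ᵐ p ∂μ, W p - V p ≤ W y - V y := by
  obtain ⟨z, rfl, hz⟩ := hV.exists_backward_orbit y
  filter_upwards [hV.ae_mapClusterPt_backward_orbit hf hμ hz] with p hp
  obtain ⟨U, -, hp⟩ := mapClusterPt_iff_ultrafilter.1 hp
  refine le_of_tendsto (((hW.continuous.sub hV.continuous).tendsto p).comp hp)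
    (Eventually.of_forall fun n => ?_)
  induction n with
  | zero => exact le_rfl
  | succ n ih =>
    refine le_trans ?_ ih
    have hzero := (hz n).2
    have hnonpos := hW.reduced_nonpos (z (n + 1))
    rw [reduced, (hz n).1] at hzero hnonpos
    change W (z (n + 1)) - V (z (n + 1)) ≤ W (z n) - V (z n)
    linarith

/-- Both `W - V` and `V - W` attain their minimum at almost every point of the maximizing
measure. -/
theorem IsCalibrated.sub_eq_sub [NeZero μ] (hf : IsControlled f s C M)
    (hV : IsCalibrated f V (mf f)) (hW : IsCalibrated f W (mf f))
    (hμ : ∀ μ', IsMaximizing f μ' → μ' = μ) (x y : MarkovShift A) : W x - V x = W y - V y := by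
  have sub_le (x y) : W x - V x ≤ W y - V y := by
    obtain ⟨p, hp, hp'⟩ := ((hV.ae_sub_le hf hμ hW.toIsSubaction y).and
      (hW.ae_sub_le hf hμ hV.toIsSubaction x)).exists
    linarith
  exact le_antisymm (sub_le x y) (sub_le y x)

theorem IsSubaction.ae_mapClusterPt_orbit (hf : IsControlled f s C M)
    (hV : IsSubaction f V (mf f)) (hμ : ∀ μ', IsMaximizing f μ' → μ' = μ) {T : ℝ}
    {y : MarkovShift A} (hT : ∀ n, -T ≤ birkhoff (reduced f V (mf f)) n y) :
    ∀ᵐ p ∂μ, MapClusterPt p atTop fun n => shift^[n] y := by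
  have hsum : Summable fun n => -reduced f V (mf f) (shift^[n] y) :=
    summable_of_sum_range_le (c := T) (fun n => neg_nonneg.2 (hV.reduced_nonpos _)) fun n => by
      rw [Finset.sum_neg_distrib]
      exact neg_le.1 (hT n)
  have hle (n : ℕ) : -T ≤ reduced f V (mf f) (shift^[n] y) := by
    have hnonpos : birkhoff (reduced f V (mf f)) n y ≤ 0 :=
      Finset.sum_nonpos fun i _ => hV.reduced_nonpos _
    linarith [hT (n + 1), birkhoff_succ (reduced f V (mf f)) n y]
  obtain ⟨Fs, hFs⟩ := hV.exists_finset_coord_mem hf T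
  have hcoord (n : ℕ) : y.1 n ∈ Fs := by
    have := hFs _ (hle n)
    rwa [shift_iterate_coord, add_zero] at this
  refine hV.ae_mapClusterPt hf hμ (F := fun _ => Fs) (fun n i => ?_) (tendsto_add_atTop_nat 1)
    (Eventually.of_forall fun n => (Function.iterate_succ_apply' _ _ _).symm)
    (by simpa only [neg_neg, neg_zero] using hsum.tendsto_atTop_zero.neg)
  rw [shift_iterate_coord]
  exact hcoord (n + i)

end Subaction

/-! ### Gibbs measures as `g`-measures -/

section GMeasure

variable {A : ℕ → ℕ → Bool} {G : MarkovShift A → ℝ} {μ : Measure (MarkovShift A)}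

/-- `μ` is a `g`-measure for `g = e^G`: the transfer operator of `G` fixes the constants and its
dual fixes the probability measure `μ`. -/
structure IsGMeasure (G : MarkovShift A → ℝ) (μ : Measure (MarkovShift A)) : Prop where
  isProbabilityMeasure : IsProbabilityMeasure μ
  transfer_one : ∀ x, transfer G 1 1 x = 1
  isConformal : IsConformal G 1 μ

theorem IsGMeasure.nonpos (h : IsGMeasure G μ) (x : MarkovShift A) : G x ≤ 0 := by
  have hle := (ENNReal.le_tsum (f := fun y : {y : MarkovShift A // shift^[1] y = shift x} =>
    ENNReal.ofReal (Real.exp (birkhoff G 1 y.1)) * 1) ⟨x, rfl⟩).trans (h.transfer_one (shift x)).le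
  rwa [mul_one, birkhoff_one, ENNReal.ofReal_le_one, Real.exp_le_one_iff] at hle

theorem IsGMeasure.measurePreserving_shift (h : IsGMeasure G μ) :
    MeasurePreserving shift μ μ := by
  refine ⟨continuous_shift.measurable, Measure.ext fun S hS => ?_⟩
  have htransfer (x : MarkovShift A) :
      transfer G 1 ((shift ⁻¹' S).indicator 1) x = S.indicator 1 x := by
    have hconst : transfer G 1 ((shift ⁻¹' S).indicator 1) x =
        transfer G 1 (fun y => S.indicator 1 x * (1 : MarkovShift A → ℝ≥0∞) y) x := by
      refine tsum_congr fun y => ?_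
      have : (shift ⁻¹' S).indicator (1 : MarkovShift A → ℝ≥0∞) y.1 = S.indicator 1 x * 1 :=
        (congrArg (S.indicator (1 : MarkovShift A → ℝ≥0∞)) y.2).trans (mul_one _).symm
      rw [this]
      rfl
    rw [hconst, transfer_const_mul, h.transfer_one, mul_one]
  have hS' := continuous_shift.measurable hS
  have hint := h.isConformal _ (measurable_one.indicator hS')
  simp only [htransfer] at hint
  rw [lintegral_indicator_one hS, lintegral_indicator_one hS', one_mul] at hint
  rw [Measure.map_apply continuous_shift.measurable hS, hint]

theorem transfer_indicator_cylOf (G : MarkovShift A → ℝ) (n : ℕ) {k : ℕ} (hk : 1 ≤ k)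
    (y x : MarkovShift A) :
    transfer G n ((cylOf y (n + k)).indicator 1) x =
      (cylOf (shift^[n] y) k).indicator
        (fun x => ENNReal.ofReal (Real.exp (birkhoff G n (glue y n x)))) x := by
  by_cases hx : x ∈ cylOf (shift^[n] y) k
  · have hglue : shift^[n] (glue y n x) = x := shift_iterate_glue (coord_zero_eq_of_mem_cylOf hk hx)
    have hone : (cylOf y (n + k)).indicator (1 : MarkovShift A → ℝ≥0∞) (glue y n x) = 1 :=
      Set.indicator_of_mem (glue_mem_cylOf hk hx) 1
    rw [Set.indicator_of_mem hx]
    refine (tsum_eq_single ⟨glue y n x, hglue⟩ fun z hz => ?_).trans (by rw [hone, mul_one])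
    refine mul_eq_zero_of_right _ (Set.indicator_of_notMem (fun hmem => hz (Subtype.ext ?_)) _)
    have hrec := glue_shift_iterate fun i hi => hmem i (hi.trans_le (Nat.add_le_add_left hk n))
    exact hrec.symm.trans (congrArg (glue y n) z.2)
  · rw [Set.indicator_of_notMem hx]
    refine ENNReal.tsum_eq_zero.2 fun z =>
      mul_eq_zero_of_right _ (Set.indicator_of_notMem (fun hmem => hx ?_) _)
    exact Eq.subst (motive := fun w => w ∈ cylOf (shift^[n] y) k) z.2
      (shift_iterate_mem_cylOf hmem)

theorem IsGMeasure.measure_cylOf_add (h : IsGMeasure G μ) (hG : Measurable G) (n : ℕ) {k : ℕ}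
    (hk : 1 ≤ k) (y : MarkovShift A) :
    μ (cylOf y (n + k)) = ∫⁻ x in cylOf (shift^[n] y) k,
      ENNReal.ofReal (Real.exp (birkhoff G n (glue y n x))) ∂μ := by
  have hmeas (y : MarkovShift A) (k : ℕ) := (isClopen_cylOf y k).isOpen.measurableSet
  have hint := h.isConformal.lintegral_transfer hG n
    (measurable_one.indicator (hmeas y (n + k)))
  rw [one_pow, one_mul, lintegral_indicator_one (hmeas y _)] at hint
  rw [← hint, ← lintegral_indicator (hmeas _ k)]
  exact lintegral_congr fun x => transfer_indicator_cylOf G n hk y x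

theorem log_toReal_le_add {a b : ℝ≥0∞} {d : ℝ} (ha : a ≠ 0) (hb : b ≠ ⊤)
    (h : a ≤ ENNReal.ofReal (Real.exp d) * b) : Real.log a.toReal ≤ d + Real.log b.toReal := by
  have hb0 : b ≠ 0 := by
    rintro rfl
    exact ha (le_zero_iff.1 (h.trans (mul_zero _).le))
  have htop := ENNReal.mul_ne_top (ENNReal.ofReal_ne_top (r := Real.exp d)) hb
  have hle := Real.log_le_log (ENNReal.toReal_pos ha (ne_top_of_le_ne_top htop h))
    (ENNReal.toReal_mono htop h)
  rwa [ENNReal.toReal_mul, ENNReal.toReal_ofReal (Real.exp_pos d).le,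
    Real.log_mul (Real.exp_pos d).ne' (ENNReal.toReal_pos hb0 hb).ne', Real.log_exp] at hle

theorem IsGMeasure.abs_log_measure_cylOf_sub_le {K : ℕ} {F : Finset ℕ} (h : IsGMeasure G μ)
    (hG : Measurable G) (hconn : IsConnectedVia A K F) {n k : ℕ} (hk : 1 ≤ k) {y : MarkovShift A}
    {d : ℝ} (hd : ∀ z ∈ cylOf y (n + k), |birkhoff G n z - birkhoff G n y| ≤ d) :
    |Real.log (μ.real (cylOf y (n + k))) -
      (Real.log (μ.real (cylOf (shift^[n] y) k)) + birkhoff G n y)| ≤ d := by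
  have := h.isProbabilityMeasure
  have hpos (y : MarkovShift A) (k : ℕ) := (h.isConformal.measure_cylOf_pos hG hconn y k).ne'
  have hmeas := (isClopen_cylOf (shift^[n] y) k).isOpen.measurableSet
  have hdist {x : MarkovShift A} (hx : x ∈ cylOf (shift^[n] y) k) :=
    abs_le.1 (hd _ (glue_mem_cylOf hk hx))
  have hle : μ (cylOf y (n + k)) ≤
      ENNReal.ofReal (Real.exp (birkhoff G n y + d)) * μ (cylOf (shift^[n] y) k) := by
    rw [h.measure_cylOf_add hG n hk, ← setLIntegral_const]
    refine setLIntegral_mono' hmeas fun x hx => ENNReal.ofReal_le_ofReal (Real.exp_le_exp.2 ?_)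
    linarith [(hdist hx).2]
  have hge : μ (cylOf (shift^[n] y) k) ≤
      ENNReal.ofReal (Real.exp (d - birkhoff G n y)) * μ (cylOf y (n + k)) := by
    rw [h.measure_cylOf_add hG n hk, ← lintegral_const_mul' _ _ ENNReal.ofReal_ne_top,
      ← setLIntegral_one]
    refine setLIntegral_mono' hmeas fun x hx => ?_
    rw [← ENNReal.ofReal_one, ← Real.exp_zero]
    exact ofReal_exp_le_mul (by linarith [(hdist hx).1])
  have hlog_le := log_toReal_le_add (hpos _ _) (measure_ne_top μ _) hle
  have hlog_ge := log_toReal_le_add (hpos _ _) (measure_ne_top μ _) hge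
  rw [measureReal_def, measureReal_def, abs_le]
  constructor <;> linarith

theorem transfer_one_indicator_notMem_le {s : ℕ → ℝ} (hs : ∀ x, G x ≤ s (x.1 0))
    (hsum : Summable fun a => Real.exp (s a)) (Fs : Finset ℕ) (x : MarkovShift A) :
    transfer G 1 ({y | y.1 0 ∉ Fs}.indicator 1) x ≤
      ENNReal.ofReal (∑' a : {a // a ∉ Fs}, Real.exp (s a)) := by
  rw [transfer_one_eq_tsum, ENNReal.ofReal_tsum_of_nonneg (fun a => (Real.exp_pos _).le)
    (hsum.subtype _)]
  refine le_of_le_of_eq (ENNReal.tsum_le_tsum fun a => ?_)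
    (tsum_subtype {a | a ∉ Fs} fun a => ENNReal.ofReal (Real.exp (s a))).symm
  by_cases ha : A a (x.1 0) = true
  · by_cases haF : a ∈ Fs
    · have hnot : cons a x ∉ {y : MarkovShift A | y.1 0 ∉ Fs} := fun hmem =>
        hmem (by rwa [cons_zero ha])
      rw [Set.indicator_of_notMem hnot, mul_zero]
      exact zero_le
    · rw [Set.indicator_of_mem (s := {a | a ∉ Fs}) haF]
      exact (mul_le_mul' (branchWeight_le hs a x) (Set.indicator_le_self' (by simp) _)).trans
        (mul_one _).le
  · rw [branchWeight, if_neg ha, zero_mul]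
    exact zero_le

theorem IsGMeasure.measure_shift_iterate_notMem_le (h : IsGMeasure G μ) {Fs : Finset ℕ} {c : ℝ≥0∞}
    (hc : ∀ x, transfer G 1 ({y | y.1 0 ∉ Fs}.indicator 1) x ≤ c) (n : ℕ) :
    μ {x | x.1 n ∉ Fs} ≤ c := by
  have := h.isProbabilityMeasure
  have hmeas : MeasurableSet {x : MarkovShift A | x.1 0 ∉ Fs} :=
    (isClopen_setOf_coord (· ∉ Fs) 0).isOpen.measurableSet
  have hpre := (h.measurePreserving_shift.iterate n).measure_preimage hmeas.nullMeasurableSet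
  simp only [Set.preimage_ofPred_eq, shift_iterate_coord, add_zero] at hpre
  rw [hpre, ← lintegral_indicator_one hmeas, ← one_mul (∫⁻ _, _ ∂μ),
    ← h.isConformal _ (measurable_one.indicator hmeas)]
  calc ∫⁻ x, transfer G 1 ({y | y.1 0 ∉ Fs}.indicator 1) x ∂μ ≤ ∫⁻ _, c ∂μ := lintegral_mono hc
    _ = c := by rw [lintegral_const, measure_univ, mul_one]

end GMeasure

/-! ### Families of Gibbs measures -/

section Gibbs

variable {A : ℕ → ℕ → Bool} {K : ℕ} {F : Finset ℕ} {f h : MarkovShift A → ℝ} {s : ℕ → ℝ} {C p : ℝ}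
  {M : ℕ → ℝ} {ν : Measure (MarkovShift A)}

theorem transfer_reduced (f V : MarkovShift A → ℝ) (m : ℝ) (n : ℕ) (u : MarkovShift A → ℝ≥0∞)
    (x : MarkovShift A) :
    transfer (reduced f V m) n u x = ENNReal.ofReal (Real.exp (-(V x + n * m))) *
      transfer f n (fun y => ENNReal.ofReal (Real.exp (V y)) * u y) x := by
  rw [transfer, transfer, ← ENNReal.tsum_mul_left]
  refine tsum_congr fun y => ?_
  rw [← mul_assoc, ← mul_assoc, ← ENNReal.ofReal_mul (Real.exp_pos _).le,
    ← ENNReal.ofReal_mul (mul_pos (Real.exp_pos _) (Real.exp_pos _)).le, ← Real.exp_add,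
    ← Real.exp_add, birkhoff_reduced, y.2]
  ring_nf

theorem IsRPF.transfer_eq (hR : IsRPF f p h ν) (x : MarkovShift A) :
    transfer f 1 (fun y => ENNReal.ofReal (h y)) x =
      ENNReal.ofReal (Real.exp p) * ENNReal.ofReal (h x) := by
  obtain ⟨-, hpos, heig, -⟩ := hR
  have htoReal := (ruelle_eq_toReal_transfer (fun y => (hpos y).le) x).symm.trans (heig x)
  rw [← ENNReal.ofReal_mul (Real.exp_pos p).le, ← htoReal, ENNReal.ofReal_toReal fun htop => ?_]
  rw [htop, ENNReal.toReal_top] at htoReal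
  exact (mul_pos (Real.exp_pos p) (hpos x)).ne htoReal

theorem IsRPF.isConformal (hf : IsControlled f s C M) (hR : IsRPF f p h ν) :
    IsConformal f (ENNReal.ofReal (Real.exp p)) ν :=
  have := hR.2.2.2.1
  isConformal_of_integral_ruelle hf.continuous.measurable hf.le_symbol hf.summable_exp
    hR.2.2.2.2.1

theorem IsRPF.lintegral_eigenfunction (hR : IsRPF f p h ν) :
    ∫⁻ x, ENNReal.ofReal (h x) ∂ν = 1 := by
  obtain ⟨-, hpos, -, -, -, hint⟩ := hR
  rw [← ofReal_integral_eq_lintegral_ofReal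
    (Integrable.of_integral_ne_zero (hint.trans_ne one_ne_zero)) (ae_of_all _ fun x => (hpos x).le),
    hint, ENNReal.ofReal_one]

theorem IsRPF.exp_le_tsum (hf : IsControlled f s C M) (hR : IsRPF f p h ν) :
    Real.exp p ≤ ∑' a, Real.exp (s a) := by
  have := hR.2.2.2.1
  have hint := hR.isConformal hf (fun _ => 1) measurable_const
  have hle := lintegral_mono (μ := ν)
    (transfer_one_le hf.le_symbol hf.summable_exp (u := fun _ => 1) (c := 1) fun _ => le_rfl)
  rw [hint, mul_one, lintegral_const, lintegral_const, measure_univ, mul_one, mul_one,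
    mul_one] at hle
  exact (ENNReal.ofReal_le_ofReal_iff (tsum_nonneg fun a => (Real.exp_pos _).le)).1 hle

theorem IsRPF.eigenfunction_le_of_mem_cylOf (hf : IsControlled f s C M)
    (hconn : IsConnectedVia A K F) (hR : IsRPF f p h ν) {k : ℕ} (hk : 1 ≤ k)
    {x y : MarkovShift A} (hxy : y ∈ cylOf x k) :
    ENNReal.ofReal (h x) ≤ ENNReal.ofReal (Real.exp (M k)) * ENNReal.ofReal (h y) := by
  have hν := hR.isConformal hf
  have := hR.2.2.2.1
  have := hν.isOpenPosMeasure hf.continuous.measurable hconn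
  exact hf.eigenfunction_le_of_mem_cylOf (ENNReal.continuous_ofReal.comp hR.1) hR.transfer_eq
    (ENNReal.ofReal_pos.2 (Real.exp_pos p)).ne' ENNReal.ofReal_ne_top hν
    (hR.lintegral_eigenfunction.trans_ne ENNReal.one_ne_top) hk hxy

theorem IsRPF.log_le_add_log (hR : IsRPF f p h ν) {x y : MarkovShift A} {d : ℝ}
    (hxy : ENNReal.ofReal (h x) ≤ ENNReal.ofReal (Real.exp d) * ENNReal.ofReal (h y)) :
    Real.log (h x) ≤ d + Real.log (h y) := by
  have hlog := log_toReal_le_add (ENNReal.ofReal_pos.2 (hR.2.1 x)).ne' ENNReal.ofReal_ne_top hxy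
  rwa [ENNReal.toReal_ofReal (hR.2.1 x).le, ENNReal.toReal_ofReal (hR.2.1 y).le] at hlog

theorem IsRPF.log_le_add_log_of_isConnectedVia (hf : IsControlled f s C M)
    (hconn : IsConnectedVia A K F) {b : ℝ} (hb : ∀ x : MarkovShift A, x.1 0 ∈ F → -b ≤ f x)
    (hR : IsRPF f p h ν) (x y : MarkovShift A) :
    Real.log (h x) ≤ (C + K * b + M 1 + K * p) + Real.log (h y) := by
  have hle := hf.transfer_one_le_of_isConnectedVia hconn hb (fun x y hxy =>
    hR.eigenfunction_le_of_mem_cylOf hf hconn le_rfl fun i hi => by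
      rw [Nat.lt_one_iff.1 hi, hxy]) x y
  refine hR.log_le_add_log ?_
  rw [hR.transfer_eq, transfer_eigen hR.transfer_eq, pow_succ', mul_left_comm, mul_assoc] at hle
  have hcancel := (ENNReal.mul_le_mul_iff_right (ENNReal.ofReal_pos.2 (Real.exp_pos p)).ne'
    ENNReal.ofReal_ne_top).1 hle
  rwa [← mul_assoc, ← ENNReal.ofReal_pow (Real.exp_pos p).le, ← Real.exp_nat_mul,
    ← ENNReal.ofReal_mul (Real.exp_pos _).le, ← Real.exp_add, add_comm (K * p)] at hcancel

theorem IsRPF.isGMeasure (hf : IsControlled f s C M) (hR : IsRPF f p h ν) :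
    IsGMeasure (reduced f (fun x => Real.log (h x)) p) (gibbs h ν) := by
  have hmeas : Measurable fun x => ENNReal.ofReal (h x) := hR.1.measurable.ennreal_ofReal
  have hexp (x : MarkovShift A) : Real.exp (Real.log (h x)) = h x := Real.exp_log (hR.2.1 x)
  have hcancel (x : MarkovShift A) (b : ℝ≥0∞) :
      ENNReal.ofReal (h x) * (ENNReal.ofReal (Real.exp (-(Real.log (h x) + (1 : ℕ) * p))) * b) =
        ENNReal.ofReal (Real.exp (-p)) * b := by
    rw [← mul_assoc, ← ENNReal.ofReal_mul (hR.2.1 x).le, Nat.cast_one, one_mul, neg_add,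
      Real.exp_add, Real.exp_neg, hexp, mul_inv_cancel_left₀ (hR.2.1 x).ne']
  have hunit (b : ℝ≥0∞) :
      ENNReal.ofReal (Real.exp (-p)) * (ENNReal.ofReal (Real.exp p) * b) = b := by
    rw [← mul_assoc, ← ENNReal.ofReal_mul (Real.exp_pos _).le, ← Real.exp_add, neg_add_cancel,
      Real.exp_zero, ENNReal.ofReal_one, one_mul]
  refine ⟨⟨?_⟩, fun x => ?_, fun u hu => ?_⟩
  · rw [gibbs, withDensity_apply _ MeasurableSet.univ, Measure.restrict_univ]
    exact hR.lintegral_eigenfunction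
  · rw [← ENNReal.mul_right_inj (ENNReal.ofReal_pos.2 (hR.2.1 x)).ne' ENNReal.ofReal_ne_top,
      transfer_reduced, hcancel]
    simp only [hexp, Pi.one_apply, mul_one, hR.transfer_eq, hunit]
  · have hG := continuous_reduced hf.continuous (hR.1.log fun x => (hR.2.1 x).ne') p
    rw [gibbs, lintegral_withDensity_eq_lintegral_mul _ hmeas (measurable_transfer hG.measurable
      hu 1), lintegral_withDensity_eq_lintegral_mul _ hmeas hu, one_mul]
    simp only [Pi.mul_apply, transfer_reduced, hcancel, hexp]
    have hint := hR.isConformal hf (fun x => ENNReal.ofReal (h x) * u x) (hmeas.mul hu)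
    rw [lintegral_const_mul' _ _ ENNReal.ofReal_ne_top, hint, hunit]

end Gibbs

section GibbsFamily

variable {A : ℕ → ℕ → Bool} {K : ℕ} {F : Finset ℕ} {f : MarkovShift A → ℝ} {s : ℕ → ℝ}
  {C D Q : ℝ} {M : ℕ → ℝ} {φ : ℝ → MarkovShift A → ℝ} {q : ℝ → ℝ} {μ : ℝ → Measure (MarkovShift A)}

/-- The Gibbs measures `μ β` of `β f`, described by the rescaled logarithms `φ β` of the
eigenfunctions and the rescaled pressures `q β`, with the bounds that are uniform in `β`. -/
structure IsGibbsFamily (f : MarkovShift A → ℝ) (M : ℕ → ℝ) (D Q : ℝ)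
    (φ : ℝ → MarkovShift A → ℝ) (q : ℝ → ℝ) (μ : ℝ → Measure (MarkovShift A)) : Prop where
  sub_le : ∀ β, 1 < β → ∀ x y, φ β x - φ β y ≤ D
  sub_le_modulus : ∀ β, 1 < β → ∀ k, 1 ≤ k → ∀ x y : MarkovShift A, y ∈ cylOf x k →
    φ β x - φ β y ≤ M k
  le_bound : ∀ β, 1 < β → q β ≤ Q
  isGMeasure : ∀ β, 1 < β → IsGMeasure (fun x => β * reduced f (φ β) (q β) x) (μ β)

theorem tsum_exp_mul_le {ι : Type*} {s : ι → ℝ} {t β : ℝ} (hs : Summable fun a => Real.exp (s a))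
    (ht : ∑' a, Real.exp (s a) ≤ Real.exp t) (hβ : 1 ≤ β) :
    ∑' a, Real.exp (β * s a) ≤ Real.exp (β * t) := by
  have hle (a : ι) : Real.exp (β * s a) ≤ Real.exp ((β - 1) * t) * Real.exp (s a) := by
    have hst : s a ≤ t := Real.exp_le_exp.1
      ((hs.le_tsum a fun _ _ => (Real.exp_pos _).le).trans ht)
    rw [← Real.exp_add, Real.exp_le_exp]
    nlinarith
  calc ∑' a, Real.exp (β * s a) ≤ ∑' a, Real.exp ((β - 1) * t) * Real.exp (s a) :=
        (Summable.of_nonneg_of_le (fun a => (Real.exp_pos _).le) hle (hs.mul_left _)).tsum_le_tsum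
          hle (hs.mul_left _)
    _ = Real.exp ((β - 1) * t) * ∑' a, Real.exp (s a) := tsum_mul_left
    _ ≤ Real.exp ((β - 1) * t) * Real.exp t := by gcongr
    _ = Real.exp (β * t) := by rw [← Real.exp_add]; ring_nf

theorem isGibbsFamily_of_isRPF (hf : IsControlled f s C M) (hconn : IsConnectedVia A K F) {b : ℝ}
    (hb : ∀ x : MarkovShift A, x.1 0 ∈ F → -b ≤ f x) (hQ : ∑' a, Real.exp (s a) ≤ Real.exp Q)
    {P : ℝ → ℝ} {h : ℝ → MarkovShift A → ℝ} {ν : ℝ → Measure (MarkovShift A)}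
    (hR : ∀ β, 1 < β → IsRPF (fun x => β * f x) (P β) (h β) (ν β)) :
    IsGibbsFamily f M (C + K * b + M 1 + K * Q) Q (fun β x => Real.log (h β x) / β)
      (fun β => P β / β) (fun β => gibbs (h β) (ν β)) := by
  have hP (β : ℝ) (hβ : 1 < β) : P β ≤ β * Q := Real.exp_le_exp.1
    (((hR β hβ).exp_le_tsum (hf.const_mul hβ)).trans (tsum_exp_mul_le hf.summable_exp hQ hβ.le))
  refine ⟨fun β hβ x y => ?_, fun β hβ k hk x y hxy => ?_, fun β hβ => ?_, fun β hβ => ?_⟩ <;>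
    have hβ0 : 0 < β := one_pos.trans hβ
  · have hlog := (hR β hβ).log_le_add_log_of_isConnectedVia (hf.const_mul hβ) hconn
      (b := β * b) (fun z hz => by nlinarith [hb z hz]) x y
    have hKP := mul_le_mul_of_nonneg_left (hP β hβ) (Nat.cast_nonneg' K)
    rw [← sub_div, div_le_iff₀ hβ0]
    linarith
  · have hlog := (hR β hβ).log_le_add_log
      ((hR β hβ).eigenfunction_le_of_mem_cylOf (hf.const_mul hβ) hconn hk hxy)
    rw [← sub_div, div_le_iff₀ hβ0]
    linarith
  · rw [div_le_iff₀ hβ0, mul_comm]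
    exact hP β hβ
  · simp only [mul_reduced, mul_div_cancel₀ _ hβ0.ne']
    exact (hR β hβ).isGMeasure (hf.const_mul hβ)

theorem IsGibbsFamily.continuous (hf : IsControlled f s C M) (hG : IsGibbsFamily f M D Q φ q μ)
    {β : ℝ} (hβ : 1 < β) : Continuous (φ β) :=
  continuous_of_modulus hf.tendsto_modulus 0 fun k hk x y hxy => abs_sub_le_iff.2
    ⟨hG.sub_le_modulus β hβ k hk x y fun i hi => (hxy i (by omega)).symm,
      hG.sub_le_modulus β hβ k hk y x fun i hi => hxy i (by omega)⟩

theorem IsGibbsFamily.measurable (hf : IsControlled f s C M) (hG : IsGibbsFamily f M D Q φ q μ)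
    {β : ℝ} (hβ : 1 < β) : Measurable fun x => β * reduced f (φ β) (q β) x :=
  (continuous_const.mul
    (continuous_reduced hf.continuous (hG.continuous hf hβ) (q β))).measurable

theorem IsGibbsFamily.isSubaction (hf : IsControlled f s C M) (hG : IsGibbsFamily f M D Q φ q μ)
    [Nonempty (MarkovShift A)] {β : ℝ} (hβ : 1 < β) : IsSubaction f (φ β) (q β) := by
  let x₀ := Classical.arbitrary (MarkovShift A)
  refine ⟨hG.continuous hf hβ, ⟨|φ β x₀| + D, fun x => ?_⟩, fun x =>
    nonpos_of_mul_nonpos_right ((hG.isGMeasure β hβ).nonpos x) (one_pos.trans hβ)⟩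
  have hxx₀ : |φ β x - φ β x₀| ≤ D :=
    abs_sub_le_iff.2 ⟨hG.sub_le β hβ x x₀, hG.sub_le β hβ x₀ x⟩
  linarith [abs_sub_abs_le_abs_sub (φ β x) (φ β x₀)]

theorem IsGibbsFamily.transfer_notMem_le (hf : IsControlled f s C M)
    (hG : IsGibbsFamily f M D Q φ q μ) {m : ℝ} (hq : ∀ β, 1 < β → m ≤ q β) (N : ℝ) :
    ∃ Fs : Finset ℕ, ∀ β, 1 < β → ∀ x,
      transfer (fun y => β * reduced f (φ β) (q β) y) 1 ({y | y.1 0 ∉ Fs}.indicator 1) x ≤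
        ENNReal.ofReal (Real.exp (-(β * N))) := by
  let t (a : ℕ) : ℝ := s a + (D - m)
  have ht : Summable fun a => Real.exp (t a) := by
    simp only [t, Real.exp_add]
    exact hf.summable_exp.mul_right _
  obtain ⟨Fs, hFs⟩ := ((tendsto_tsum_compl_atTop_zero fun a => Real.exp (t a)).eventually
    (gt_mem_nhds (Real.exp_pos (-N)))).exists
  refine ⟨Fs, fun β hβ x => (transfer_one_indicator_notMem_le (s := fun a => β * t a)
    (fun y => mul_le_mul_of_nonneg_left ?_ (by linarith)) ?_ Fs x).trans
    (ENNReal.ofReal_le_ofReal ?_)⟩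
  · simp only [reduced, t]
    linarith [hf.le_symbol y, hG.sub_le β hβ y (shift y), hq β hβ]
  · simp only [t, mul_add, Real.exp_add]
    exact (hf.const_mul hβ).summable_exp.mul_right _
  · rw [← mul_neg]
    exact tsum_exp_mul_le (ht.subtype _) hFs.le hβ.le

theorem IsGibbsFamily.abs_birkhoff_sub_le (hf : IsControlled f s C M)
    (hG : IsGibbsFamily f M D Q φ q μ) {β : ℝ} (hβ : 1 < β) {n k : ℕ} (hk : 1 ≤ k)
    {y z : MarkovShift A} (hz : z ∈ cylOf y (n + k)) :
    |birkhoff (reduced f (φ β) (q β)) n z - birkhoff (reduced f (φ β) (q β)) n y| ≤ 3 * M k := by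
  have hφ {x y : MarkovShift A} (h : y ∈ cylOf x k) : |φ β y - φ β x| ≤ M k :=
    abs_sub_le_iff.2 ⟨hG.sub_le_modulus β hβ k hk y x (cylOf_eq_of_mem h ▸ self_mem_cylOf x k),
      hG.sub_le_modulus β hβ k hk x y h⟩
  have hstart := abs_le.1 (hφ (x := y) (y := z) fun i hi => hz i (by omega))
  have hend := abs_le.1 (hφ (shift_iterate_mem_cylOf hz))
  have hsum := abs_le.1 (hf.abs_birkhoff_sub_le n k hk z y hz)
  rw [birkhoff_reduced, birkhoff_reduced, abs_le]
  constructor <;> linarith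

theorem IsGibbsFamily.abs_log_measure_cylOf_sub_le (hf : IsControlled f s C M)
    (hG : IsGibbsFamily f M D Q φ q μ) (hconn : IsConnectedVia A K F) {β : ℝ} (hβ : 1 < β)
    {n k : ℕ} (hk : 1 ≤ k) (y : MarkovShift A) :
    |Real.log ((μ β).real (cylOf y (n + k))) / β -
      (Real.log ((μ β).real (cylOf (shift^[n] y) k)) / β +
        birkhoff (reduced f (φ β) (q β)) n y)| ≤ 3 * M k := by
  have hβ0 : 0 < β := one_pos.trans hβ
  have hlog := (hG.isGMeasure β hβ).abs_log_measure_cylOf_sub_le (hG.measurable hf hβ) hconn hk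
    (y := y) (n := n) (d := β * (3 * M k)) fun z hz => by
      rw [birkhoff_const_mul, birkhoff_const_mul, ← mul_sub, abs_mul, abs_of_pos hβ0]
      exact mul_le_mul_of_nonneg_left (hG.abs_birkhoff_sub_le hf hβ hk hz) hβ0.le
  rw [birkhoff_const_mul] at hlog
  rw [← mul_le_mul_iff_right₀ hβ0, ← abs_of_pos hβ0, ← abs_mul, abs_of_pos hβ0, mul_sub, mul_add,
    mul_div_cancel₀ _ hβ0.ne', mul_div_cancel₀ _ hβ0.ne']
  exact hlog

end GibbsFamily

/-! ### Zero-temperature limits -/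

section ZeroTemperature

variable {A : ℕ → ℕ → Bool} {f V ψ : MarkovShift A → ℝ} {s : ℕ → ℝ} {C D Q m : ℝ} {M : ℕ → ℝ}
  {φ : ℝ → MarkovShift A → ℝ} {q : ℝ → ℝ} {μ : ℝ → Measure (MarkovShift A)}
  {μmax : Measure (MarkovShift A)} {l : Filter ℝ}

theorem transfer_one_one_le (G : MarkovShift A → ℝ) (Fs : Finset ℕ) (x : MarkovShift A) :
    transfer G 1 1 x ≤
      ∑ a ∈ Fs, branchWeight G a x + transfer G 1 ({y | y.1 0 ∉ Fs}.indicator 1) x := by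
  rw [transfer_one_eq_tsum, transfer_one_eq_tsum, sum_eq_tsum_indicator, ← ENNReal.tsum_add]
  refine ENNReal.tsum_le_tsum fun a => ?_
  rw [Pi.one_apply, mul_one]
  by_cases haF : a ∈ Fs
  · rw [Set.indicator_of_mem (Finset.mem_coe.2 haF)]
    exact le_self_add
  by_cases ha : A a (x.1 0) = true
  · have hmem : cons a x ∈ {y : MarkovShift A | y.1 0 ∉ Fs} := by
      rwa [Set.mem_ofPred_eq, cons_zero ha]
    rw [Set.indicator_of_mem hmem, Pi.one_apply, mul_one]
    exact le_add_self
  · rw [branchWeight, if_neg ha]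
    exact zero_le

theorem exists_tendsto_of_eventually_mem_Icc {ι : Type*} {U : Ultrafilter ι} {g : ι → ℝ} {a b : ℝ}
    (h : ∀ᶠ i in (U : Filter ι), g i ∈ Set.Icc a b) : ∃ t, Tendsto g U (𝓝 t) := by
  obtain ⟨t, -, ht⟩ := isCompact_Icc.ultrafilter_le_nhds (U.map g) (Filter.le_principal_iff.2 h)
  exact ⟨t, ht⟩

theorem tendsto_reduced (hφ : ∀ x y, Tendsto (fun β => φ β x - φ β y) l (𝓝 (ψ x - ψ y)))
    (hq : Tendsto q l (𝓝 m)) (x : MarkovShift A) :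
    Tendsto (fun β => reduced f (φ β) (q β) x) l (𝓝 (reduced f ψ m x)) := by
  have hsum := ((hφ x (shift x)).const_add (f x)).sub hq
  simp only [← add_sub_assoc] at hsum
  exact hsum

variable [Nonempty (MarkovShift A)]

theorem IsGibbsFamily.isSubaction_of_tendsto [l.NeBot] (hf : IsControlled f s C M)
    (hG : IsGibbsFamily f M D Q φ q μ) (hl : l ≤ atTop)
    (hφ : ∀ x y, Tendsto (fun β => φ β x - φ β y) l (𝓝 (ψ x - ψ y))) (hq : Tendsto q l (𝓝 m)) :
    IsSubaction f ψ m := by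
  have hβ : ∀ᶠ β in l, 1 < β := hl (eventually_gt_atTop 1)
  have hosc (x y : MarkovShift A) : ψ x - ψ y ≤ D :=
    le_of_tendsto (hφ x y) (hβ.mono fun β hβ => hG.sub_le β hβ x y)
  have hmod {k : ℕ} (hk : 1 ≤ k) {x y : MarkovShift A} (hxy : y ∈ cylOf x k) : ψ x - ψ y ≤ M k :=
    le_of_tendsto (hφ x y) (hβ.mono fun β hβ => hG.sub_le_modulus β hβ k hk x y hxy)
  let x₀ := Classical.arbitrary (MarkovShift A)
  refine ⟨continuous_of_modulus hf.tendsto_modulus 0 fun k hk x y hxy => ?_,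
    ⟨|ψ x₀| + D, fun x => ?_⟩, fun x => ?_⟩
  · exact abs_sub_le_iff.2 ⟨hmod hk fun i hi => (hxy i (by omega)).symm,
      hmod hk fun i hi => hxy i (by omega)⟩
  · have hxx₀ : |ψ x - ψ x₀| ≤ D := abs_sub_le_iff.2 ⟨hosc x x₀, hosc x₀ x⟩
    linarith [abs_sub_abs_le_abs_sub (ψ x) (ψ x₀)]
  · exact le_of_tendsto (tendsto_reduced hφ hq x)
      (hβ.mono fun β hβ => (hG.isSubaction hf hβ).reduced_nonpos x)

/-- If the defect of the limit were negative at every preimage of a point, all branch weights there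
would vanish in the limit, although they sum to `1`. -/
theorem IsGibbsFamily.isCalibrated_of_tendsto [l.NeBot] (hf : IsControlled f s C M)
    (hG : IsGibbsFamily f M D Q φ q μ) {m' : ℝ} (hm' : ∀ β, 1 < β → m' ≤ q β) (hl : l ≤ atTop)
    (hφ : ∀ x y, Tendsto (fun β => φ β x - φ β y) l (𝓝 (ψ x - ψ y))) (hq : Tendsto q l (𝓝 m)) :
    IsCalibrated f ψ m := by
  have hψ := hG.isSubaction_of_tendsto hf hl hφ hq
  refine ⟨hψ, fun y => ?_⟩
  by_contra! hne
  let w (β : ℝ) (a : ℕ) : ℝ≥0∞ := branchWeight (fun x => β * reduced f (φ β) (q β) x) a y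
  obtain ⟨Fs, hFs⟩ := hG.transfer_notMem_le hf hm' 1
  have hbranch (a : ℕ) : Tendsto (fun β => w β a) l (𝓝 0) := by
    by_cases ha : A a (y.1 0) = true
    · have hneg : reduced f ψ m (cons a y) < 0 :=
        (hψ.reduced_nonpos _).lt_of_ne (hne _ (shift_cons ha))
      have hexp := ENNReal.tendsto_ofReal (Real.tendsto_exp_atBot.comp
        ((tendsto_id.mono_left hl).atTop_mul_neg hneg (tendsto_reduced hφ hq (cons a y))))
      rw [ENNReal.ofReal_zero] at hexp
      exact hexp.congr fun β => (if_pos ha).symm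
    · exact tendsto_const_nhds.congr fun β => (if_neg ha).symm
  have htail : Tendsto (fun β : ℝ => ENNReal.ofReal (Real.exp (-(β * 1)))) l (𝓝 0) := by
    simp only [mul_one]
    have hexp := ENNReal.tendsto_ofReal (Real.tendsto_exp_neg_atTop_nhds_zero.mono_left hl)
    rwa [ENNReal.ofReal_zero] at hexp
  have hsum := (tendsto_finsetSum Fs fun a _ => hbranch a).add htail
  rw [Finset.sum_const_zero, add_zero] at hsum
  refine one_ne_zero (le_zero_iff.1 (ge_of_tendsto hsum ?_))
  filter_upwards [hl (eventually_gt_atTop 1)] with β hβ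
  rw [← (hG.isGMeasure β hβ).transfer_one y]
  exact (transfer_one_one_le _ Fs y).trans (add_le_add_right (hFs β hβ y) _)

theorem IsGibbsFamily.tendsto_reduced [NeZero μmax] (hf : IsControlled f s C M)
    (hG : IsGibbsFamily f M D Q φ q μ) (hμ : ∀ μ', IsMaximizing f μ' → μ' = μmax)
    (hV : IsCalibrated f V (mf f)) (x : MarkovShift A) :
    Tendsto (fun β => reduced f (φ β) (q β) x) atTop (𝓝 (reduced f V (mf f) x)) := by
  refine (tendsto_iff_ultrafilter _ _ _).2 fun U hU => ?_
  have hβ : ∀ᶠ β in (U : Filter ℝ), 1 < β := hU (eventually_gt_atTop 1)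
  have hmq (β : ℝ) (hβ : 1 < β) : mf f ≤ q β := hV.le_of_isSubaction (hG.isSubaction hf hβ)
  let x₀ := Classical.arbitrary (MarkovShift A)
  obtain ⟨m', hm'⟩ := exists_tendsto_of_eventually_mem_Icc
    (hβ.mono fun β hβ => ⟨hmq β hβ, hG.le_bound β hβ⟩)
  choose ψ hψ using fun x => exists_tendsto_of_eventually_mem_Icc
    (hβ.mono fun β hβ => ⟨neg_le.1 ((neg_sub _ _).trans_le (hG.sub_le β hβ x₀ x)),
      hG.sub_le β hβ x x₀⟩)
  have hsub (x y : MarkovShift A) : Tendsto (fun β => φ β x - φ β y) U (𝓝 (ψ x - ψ y)) :=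
    ((hψ x).sub (hψ y)).congr fun β => sub_sub_sub_cancel_right _ _ _
  have hcal := hG.isCalibrated_of_tendsto hf hmq hU hsub hm'
  obtain rfl : m' = mf f :=
    le_antisymm (hcal.le_of_isSubaction hV.toIsSubaction) (hV.le_of_isSubaction hcal.toIsSubaction)
  have hψV := hV.sub_eq_sub hf hcal hμ x (shift x)
  have hreduced : reduced f V (mf f) x = reduced f ψ (mf f) x := by
    rw [reduced, reduced]
    linarith
  rw [hreduced]
  exact MarkovShift.tendsto_reduced hsub hm' x

theorem IsGibbsFamily.tendsto_birkhoff_reduced [NeZero μmax] (hf : IsControlled f s C M)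
    (hG : IsGibbsFamily f M D Q φ q μ) (hμ : ∀ μ', IsMaximizing f μ' → μ' = μmax)
    (hV : IsCalibrated f V (mf f)) (n : ℕ) (x : MarkovShift A) :
    Tendsto (fun β => birkhoff (reduced f (φ β) (q β)) n x) atTop
      (𝓝 (birkhoff (reduced f V (mf f)) n x)) :=
  tendsto_finsetSum _ fun _ _ => hG.tendsto_reduced hf hμ hV _

end ZeroTemperature

/-! ### Sets that are heavy along an ultrafilter -/

section Heavy

variable {α : Type*} [MeasurableSpace α] {μ : ℝ → Measure α} {U : Ultrafilter ℝ} {t : ℝ}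
  {S T : Set α}

/-- `μ β S` is at least `e^{β t}`, up to a factor subexponential in `β`, along the
ultrafilter `U`. An ultrafilter is what makes one of two sets heavy when their union is. -/
def IsHeavy (μ : ℝ → Measure α) (U : Ultrafilter ℝ) (t : ℝ) (S : Set α) : Prop :=
  ∀ ε > 0, ∀ᶠ β in (U : Filter ℝ), ENNReal.ofReal (Real.exp (β * (t - ε))) ≤ μ β S

theorem IsHeavy.mono (h : IsHeavy μ U t S) (hST : S ⊆ T) : IsHeavy μ U t T := fun ε hε =>
  (h ε hε).mono fun _ hβ => hβ.trans (measure_mono hST)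

theorem IsHeavy.nonempty (h : IsHeavy μ U t S) : S.Nonempty := by
  obtain ⟨β, hβ⟩ := (h 1 one_pos).exists
  exact nonempty_of_measure_ne_zero ((ENNReal.ofReal_pos.2 (Real.exp_pos _)).trans_le hβ).ne'

theorem IsHeavy.or_of_union (hU : (U : Filter ℝ) ≤ atTop) (h : IsHeavy μ U t (S ∪ T)) :
    IsHeavy μ U t S ∨ IsHeavy μ U t T := by
  by_contra! ⟨hS, hT⟩
  simp only [IsHeavy, not_forall, ← Ultrafilter.eventually_not, not_le] at hS hT
  obtain ⟨ε₁, hε₁, hS⟩ := hS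
  obtain ⟨ε₂, hε₂, hT⟩ := hT
  let ε := min ε₁ ε₂
  have hε : 0 < ε := lt_min hε₁ hε₂
  have hexp : ∀ᶠ β : ℝ in atTop, 2 ≤ Real.exp (β * (ε / 2)) :=
    (Real.tendsto_exp_atTop.comp (tendsto_id.atTop_mul_const (half_pos hε))).eventually_ge_atTop 2
  obtain ⟨β, hS, hT, hST, hexp, hβ⟩ := (hS.and (hT.and ((h _ (half_pos hε)).and
    ((hexp.filter_mono hU).and (hU (eventually_ge_atTop 0)))))).exists
  refine (ENNReal.add_lt_add hS hT).not_ge (((ENNReal.ofReal_add (Real.exp_pos _).le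
    (Real.exp_pos _).le).symm.trans_le (ENNReal.ofReal_le_ofReal ?_)).trans
    (hST.trans (measure_union_le S T)))
  calc Real.exp (β * (t - ε₁)) + Real.exp (β * (t - ε₂))
      ≤ Real.exp (β * (t - ε)) + Real.exp (β * (t - ε)) := by
        gcongr
        exacts [min_le_left _ _, min_le_right _ _]
    _ = 2 * Real.exp (β * (t - ε)) := (two_mul _).symm
    _ ≤ Real.exp (β * (ε / 2)) * Real.exp (β * (t - ε)) := by gcongr
    _ = Real.exp (β * (t - ε / 2)) := by rw [← Real.exp_add]; ring_nf

theorem IsHeavy.exists_of_biUnion {ι : Type*} {Fs : Finset ι} {S : ι → Set α}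
    (hU : (U : Filter ℝ) ≤ atTop) (h : IsHeavy μ U t (⋃ a ∈ Fs, S a)) :
    ∃ a ∈ Fs, IsHeavy μ U t (S a) := by
  classical
  induction Fs using Finset.induction_on with
  | empty => simpa using h.nonempty
  | insert a Fs _ ih =>
    rw [Finset.set_biUnion_insert] at h
    rcases h.or_of_union hU with ha | hFs
    · exact ⟨a, Finset.mem_insert_self a Fs, ha⟩
    · obtain ⟨b, hb, hheavy⟩ := ih hFs
      exact ⟨b, Finset.mem_insert_of_mem hb, hheavy⟩

theorem IsHeavy.eventually_le_log (hU : (U : Filter ℝ) ≤ atTop) (h : IsHeavy μ U t S)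
    (hS : ∀ β, 1 < β → μ β S ≠ ∞) {ε : ℝ} (hε : 0 < ε) :
    ∀ᶠ β in (U : Filter ℝ), t - ε ≤ Real.log ((μ β).real S) / β := by
  filter_upwards [h ε hε, hU (eventually_gt_atTop 1)] with β hle hβ
  have hexp := (ENNReal.ofReal_le_iff_le_toReal (hS β hβ)).1 hle
  rw [le_div_iff₀ (one_pos.trans hβ), mul_comm]
  exact (Real.le_log_iff_exp_le ((Real.exp_pos _).trans_le hexp)).2 hexp

end Heavy

section HeavyPoints

variable {A : ℕ → ℕ → Bool} {K : ℕ} {F : Finset ℕ} {f V : MarkovShift A → ℝ} {s : ℕ → ℝ}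
  {C D Q m t : ℝ} {M : ℕ → ℝ} {φ : ℝ → MarkovShift A → ℝ} {q : ℝ → ℝ}
  {μ : ℝ → Measure (MarkovShift A)} {μmax : Measure (MarkovShift A)} {U : Ultrafilter ℝ}

theorem IsGibbsFamily.exists_isHeavy_cylOf_succ (hf : IsControlled f s C M)
    (hG : IsGibbsFamily f M D Q φ q μ) (hq : ∀ β, 1 < β → m ≤ q β) (hU : (U : Filter ℝ) ≤ atTop)
    {y : MarkovShift A} {n : ℕ} (h : IsHeavy μ U t (cylOf y n)) :
    ∃ z ∈ cylOf y n, IsHeavy μ U t (cylOf z (n + 1)) := by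
  obtain ⟨Fs, hFs⟩ := hG.transfer_notMem_le hf hq (1 - t)
  have hcover : cylOf y n ⊆ {x | x.1 n ∉ Fs} ∪ ⋃ a ∈ Fs, cylOf y n ∩ {x | x.1 n = a} := by
    intro x hx
    by_cases hxF : x.1 n ∈ Fs
    · exact Or.inr (Set.mem_biUnion hxF ⟨hx, rfl⟩)
    · exact Or.inl hxF
  rcases (h.mono hcover).or_of_union hU with htail | hbranch
  · obtain ⟨β, hle, hβ⟩ := ((htail (1 / 2) one_half_pos).and (hU (eventually_gt_atTop 1))).exists
    have hexp := hle.trans ((hG.isGMeasure β hβ).measure_shift_iterate_notMem_le (hFs β hβ) n)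
    rw [ENNReal.ofReal_le_ofReal_iff (Real.exp_pos _).le, Real.exp_le_exp] at hexp
    linarith
  · obtain ⟨a, -, ha⟩ := hbranch.exists_of_biUnion hU
    obtain ⟨z, hz, rfl⟩ := ha.nonempty
    refine ⟨z, hz, ha.mono ?_⟩
    rintro x ⟨hx, hxn⟩ i hi
    rcases Nat.lt_succ_iff_lt_or_eq.1 hi with hi | rfl
    · exact (hx i hi).trans (hz i hi).symm
    · exact hxn

theorem IsGibbsFamily.exists_forall_isHeavy_cylOf (hf : IsControlled f s C M)
    (hG : IsGibbsFamily f M D Q φ q μ) (hq : ∀ β, 1 < β → m ≤ q β) (hU : (U : Filter ℝ) ≤ atTop)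
    {y : MarkovShift A} {n : ℕ} (h : IsHeavy μ U t (cylOf y n)) :
    ∃ z ∈ cylOf y n, ∀ i, IsHeavy μ U t (cylOf z (n + i)) := by
  have : Nonempty (MarkovShift A) := ⟨y⟩
  choose! g hmem hheavy using fun (i : ℕ) (x : MarkovShift A)
    (hx : IsHeavy μ U t (cylOf x (n + i))) => hG.exists_isHeavy_cylOf_succ hf hq hU hx
  let Y (i : ℕ) : MarkovShift A := Nat.rec y g i
  have hY (i : ℕ) : IsHeavy μ U t (cylOf (Y i) (n + i)) := by
    induction i with
    | zero => exact h
    | succ i ih => exact hheavy i (Y i) ih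
  obtain ⟨z, hz⟩ := exists_forall_mem_cylOf fun i => hmem i (Y i) (hY i)
  exact ⟨z, hz 0, fun i => cylOf_eq_of_mem (hz i) ▸ hY i⟩

theorem IsGibbsFamily.log_measure_div_nonpos (hG : IsGibbsFamily f M D Q φ q μ) {β : ℝ}
    (hβ : 1 < β) (S : Set (MarkovShift A)) : Real.log ((μ β).real S) / β ≤ 0 :=
  have := (hG.isGMeasure β hβ).isProbabilityMeasure
  div_nonpos_of_nonpos_of_nonneg (Real.log_nonpos measureReal_nonneg measureReal_le_one)
    (by linarith)

theorem IsGibbsFamily.measure_ne_top (hG : IsGibbsFamily f M D Q φ q μ) {β : ℝ} (hβ : 1 < β)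
    (S : Set (MarkovShift A)) : μ β S ≠ ∞ :=
  have := (hG.isGMeasure β hβ).isProbabilityMeasure
  MeasureTheory.measure_ne_top _ _

theorem IsGibbsFamily.measureReal_cylOf_pos (hf : IsControlled f s C M)
    (hG : IsGibbsFamily f M D Q φ q μ) (hconn : IsConnectedVia A K F) {β : ℝ} (hβ : 1 < β)
    (y : MarkovShift A) (n : ℕ) : 0 < (μ β).real (cylOf y n) :=
  have := (hG.isGMeasure β hβ).isProbabilityMeasure
  ENNReal.toReal_pos ((hG.isGMeasure β hβ).isConformal.measure_cylOf_pos (hG.measurable hf hβ)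
    hconn y n).ne' (hG.measure_ne_top hβ _)

variable [Nonempty (MarkovShift A)] [NeZero μmax]

theorem IsGibbsFamily.le_birkhoff_of_isHeavy (hf : IsControlled f s C M)
    (hG : IsGibbsFamily f M D Q φ q μ) (hconn : IsConnectedVia A K F)
    (hμ : ∀ μ', IsMaximizing f μ' → μ' = μmax) (hV : IsCalibrated f V (mf f))
    (hU : (U : Filter ℝ) ≤ atTop) {z : MarkovShift A} {n : ℕ}
    (h : ∀ i, IsHeavy μ U t (cylOf z (n + i))) (N : ℕ) :
    t ≤ birkhoff (reduced f V (mf f)) N z := by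
  refine le_of_forall_pos_le_add fun ε hε => ?_
  obtain ⟨k, hnk, hk⟩ := ((eventually_ge_atTop (n + 1)).and
    (hf.tendsto_modulus.eventually (gt_mem_nhds (show 0 < ε / 6 by linarith)))).exists
  have hheavy : IsHeavy μ U t (cylOf z (N + k)) := by
    have := h (N + k - n)
    rwa [show n + (N + k - n) = N + k by omega] at this
  have hlim := (hG.tendsto_birkhoff_reduced hf hμ hV N z).mono_left hU
  refine sub_le_iff_le_add.1 (ge_of_tendsto hlim ?_)
  filter_upwards [hU (eventually_gt_atTop 1), hheavy.eventually_le_log hU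
    (fun β hβ => hG.measure_ne_top hβ _) (half_pos hε)] with β hβ hlog
  have hcyl := (abs_le.1 (hG.abs_log_measure_cylOf_sub_le hf hconn hβ
    (show 1 ≤ k by omega) (n := N) z)).2
  linarith [hG.log_measure_div_nonpos hβ (cylOf (shift^[N] z) k)]

theorem IsGibbsFamily.ae_isHeavy_cylOf (hf : IsControlled f s C M)
    (hG : IsGibbsFamily f M D Q φ q μ) (hconn : IsConnectedVia A K F)
    (hμ : ∀ μ', IsMaximizing f μ' → μ' = μmax) (hV : IsCalibrated f V (mf f))
    (hU : (U : Filter ℝ) ≤ atTop) : ∀ᵐ p ∂μmax, ∀ k, IsHeavy μ U 0 (cylOf p k) := by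
  have hβ : ∀ᶠ β in (U : Filter ℝ), 1 < β := hU (eventually_gt_atTop 1)
  refine hV.mem_ae_of_isClosed hf hμ (isClosed_of_closure_subset fun x hx k => ?_) ?_
    (fun x hx k ε hε => ?_) fun x hx => ?_
  · obtain ⟨y, hy, hheavy⟩ := mem_closure_iff_nhds.1 hx _ (cylOf_mem_nhds x k)
    rw [← cylOf_eq_of_mem hy]
    exact hheavy k
  · have huniv : IsHeavy μ U 0 (cylOf (Classical.arbitrary (MarkovShift A)) 0) := by
      intro ε hε
      filter_upwards [hβ] with β hβ
      have := (hG.isGMeasure β hβ).isProbabilityMeasure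
      rw [cylOf_zero, measure_univ, ENNReal.ofReal_le_one, Real.exp_le_one_iff]
      nlinarith
    obtain ⟨z, -, hz⟩ := hG.exists_forall_isHeavy_cylOf hf
      (fun β hβ => hV.le_of_isSubaction (hG.isSubaction hf hβ)) hU huniv
    exact ⟨z, fun k => zero_add k ▸ hz k⟩
  · filter_upwards [hβ, hx (k + 1) ε hε] with β hβ hle
    rw [← (hG.isGMeasure β hβ).measurePreserving_shift.measure_preimage
      (isClopen_cylOf _ _).isOpen.measurableSet.nullMeasurableSet]
    exact hle.trans (measure_mono fun y hy i hi => hy (i + 1) (by omega))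
  · refine le_antisymm (hV.reduced_nonpos x) ?_
    rw [← birkhoff_one (reduced f V (mf f))]
    exact hG.le_birkhoff_of_isHeavy hf hconn hμ hV hU (n := 0) (fun i => hx (0 + i)) 1

/-- The orbit of `y` returns to the cylinders of a heavy point `p`, so the cylinder of `y` up to
such a return costs no more than the Birkhoff sum of the defect. -/
theorem IsGibbsFamily.eventually_le_log_measure_cylOf (hf : IsControlled f s C M)
    (hG : IsGibbsFamily f M D Q φ q μ) (hconn : IsConnectedVia A K F)
    (hμ : ∀ μ', IsMaximizing f μ' → μ' = μmax) (hV : IsCalibrated f V (mf f))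
    {y : MarkovShift A} (n : ℕ) {T : ℝ}
    (hT : ∀ N, -T ≤ birkhoff (reduced f V (mf f)) N y) {ε : ℝ} (hε : 0 < ε) :
    ∀ᶠ β in atTop, -T - ε ≤ Real.log ((μ β).real (cylOf y n)) / β := by
  refine mem_iff_ultrafilter.2 fun U hU => ?_
  obtain ⟨p, hp, hheavy⟩ := ((hV.ae_mapClusterPt_orbit hf hμ hT).and
    (hG.ae_isHeavy_cylOf hf hconn hμ hV hU)).exists
  obtain ⟨k, hk1, hk⟩ := ((eventually_ge_atTop 1).and
    (hf.tendsto_modulus.eventually (gt_mem_nhds (show 0 < ε / 9 by linarith)))).exists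
  obtain ⟨N, hN, hNn⟩ :=
    ((hp.frequently (cylOf_mem_nhds p k)).and_eventually (eventually_ge_atTop n)).exists
  have hlim := (hG.tendsto_birkhoff_reduced hf hμ hV N y).eventually
    (lt_mem_nhds (show -T - ε / 3 < _ by linarith [hT N]))
  filter_upwards [hU (eventually_gt_atTop 1), (hheavy k).eventually_le_log hU
    (fun β hβ => hG.measure_ne_top hβ _) (show 0 < ε / 3 by linarith), hU hlim] with β hβ hlog hsum
  have := (hG.isGMeasure β hβ).isProbabilityMeasure
  have hcyl := (abs_le.1 (hG.abs_log_measure_cylOf_sub_le hf hconn hβ hk1 (n := N) y)).1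
  rw [cylOf_eq_of_mem hN] at hcyl
  have hmono : Real.log ((μ β).real (cylOf y (N + k))) / β ≤
      Real.log ((μ β).real (cylOf y n)) / β := by
    have hpos := hG.measureReal_cylOf_pos hf hconn hβ y (N + k)
    have hsubset : cylOf y (N + k) ⊆ cylOf y n := fun x hx i hi => hx i (by omega)
    gcongr
    exact MeasureTheory.measure_ne_top _ _
  linarith

end HeavyPoints

/-! ### The large deviation principle -/

section LargeDeviations

variable {A : ℕ → ℕ → Bool} {K : ℕ} {F : Finset ℕ} {f V : MarkovShift A → ℝ} {s : ℕ → ℝ}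
  {C D Q : ℝ} {M : ℕ → ℝ} {φ : ℝ → MarkovShift A → ℝ} {q : ℝ → ℝ} {μ : ℝ → Measure (MarkovShift A)}
  {μmax : Measure (MarkovShift A)}

/-- The rate function `I(x) = -∑ (f + V - V ∘ σ - m(f)) (σʲ x)`, with values in `[0, ∞]`. -/
noncomputable def rateFunction (f V : MarkovShift A → ℝ) (x : MarkovShift A) : ℝ≥0∞ :=
  ∑' j : ℕ, ENNReal.ofReal (-reduced f V (mf f) (shift^[j] x))

theorem IsSubaction.sum_range_ofReal_neg_reduced {m : ℝ} (hV : IsSubaction f V m) (N : ℕ)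
    (x : MarkovShift A) :
    ∑ j ∈ Finset.range N, ENNReal.ofReal (-reduced f V m (shift^[j] x)) =
      ENNReal.ofReal (-birkhoff (reduced f V m) N x) := by
  rw [← ENNReal.ofReal_sum_of_nonneg fun j _ => neg_nonneg.2 (hV.reduced_nonpos _),
    Finset.sum_neg_distrib]
  rfl

theorem IsSubaction.rateFunction_le (hV : IsSubaction f V (mf f)) {x : MarkovShift A} {c : ℝ}
    (hc : ∀ N, -c ≤ birkhoff (reduced f V (mf f)) N x) : (rateFunction f V x : EReal) ≤ c := by
  have hc0 : 0 ≤ c := neg_nonpos.1 (birkhoff_zero (reduced f V (mf f)) x ▸ hc 0)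
  have hle : rateFunction f V x ≤ ENNReal.ofReal c := ENNReal.tsum_le_of_sum_range_le fun N => by
    rw [hV.sum_range_ofReal_neg_reduced]
    exact ENNReal.ofReal_le_ofReal (neg_le.1 (hc N))
  rwa [← EReal.coe_ennreal_le_coe_ennreal_iff, EReal.coe_ennreal_ofReal, max_eq_left hc0] at hle

theorem IsSubaction.neg_toReal_rateFunction_le (hV : IsSubaction f V (mf f)) {x : MarkovShift A}
    (hx : rateFunction f V x ≠ ∞) (N : ℕ) :
    -(rateFunction f V x).toReal ≤ birkhoff (reduced f V (mf f)) N x := by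
  have hle : ENNReal.ofReal (-birkhoff (reduced f V (mf f)) N x) ≤ rateFunction f V x :=
    (hV.sum_range_ofReal_neg_reduced N x).symm.trans_le (ENNReal.sum_le_tsum _)
  exact neg_le.1 ((ENNReal.ofReal_le_iff_le_toReal hx).1 hle)

variable [Nonempty (MarkovShift A)] [NeZero μmax]

theorem IsGibbsFamily.eventually_neg_le_log_measure_cylOf (hf : IsControlled f s C M)
    (hG : IsGibbsFamily f M D Q φ q μ) (hconn : IsConnectedVia A K F)
    (hμ : ∀ μ', IsMaximizing f μ' → μ' = μmax) (hV : IsCalibrated f V (mf f)) {y : MarkovShift A}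
    {n : ℕ} {c : ℝ} (hc : ((⨅ x ∈ cylOf y n, rateFunction f V x : ℝ≥0∞) : EReal) < c) :
    ∀ᶠ β in atTop, -c ≤ Real.log ((μ β).real (cylOf y n)) / β := by
  have hlt : (⨅ x ∈ cylOf y n, rateFunction f V x) < ENNReal.ofReal c := by
    rw [← EReal.coe_ennreal_lt_coe_ennreal_iff, EReal.coe_ennreal_ofReal]
    exact hc.trans_le (EReal.coe_le_coe (le_max_left _ _))
  simp only [iInf_lt_iff] at hlt
  obtain ⟨x, hx, hxc⟩ := hlt
  have hlower := hG.eventually_le_log_measure_cylOf hf hconn hμ hV n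
    (hV.neg_toReal_rateFunction_le hxc.ne_top)
    (sub_pos.2 ((ENNReal.lt_ofReal_iff_toReal_lt hxc.ne_top).1 hxc))
  simpa only [cylOf_eq_of_mem hx, neg_sub_left, sub_add_cancel] using hlower

theorem IsGibbsFamily.eventually_log_measure_cylOf_lt (hf : IsControlled f s C M)
    (hG : IsGibbsFamily f M D Q φ q μ) (hconn : IsConnectedVia A K F)
    (hμ : ∀ μ', IsMaximizing f μ' → μ' = μmax) (hV : IsCalibrated f V (mf f)) {y : MarkovShift A}
    {n : ℕ} {c : ℝ} (hc : (c : EReal) < (⨅ x ∈ cylOf y n, rateFunction f V x : ℝ≥0∞)) :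
    ∀ᶠ β in atTop, Real.log ((μ β).real (cylOf y n)) / β < -c := by
  refine mem_iff_ultrafilter.2 fun U hU => ?_
  by_contra hfreq
  have hlarge : ∀ᶠ β in (U : Filter ℝ), -c ≤ Real.log ((μ β).real (cylOf y n)) / β :=
    (Ultrafilter.eventually_not.2 hfreq).mono fun _ => not_lt.1
  have hheavy : IsHeavy μ U (-c) (cylOf y n) := by
    intro ε hε
    filter_upwards [hlarge, hU (eventually_gt_atTop 1)] with β hle hβ
    have hβ0 : 0 < β := one_pos.trans hβ
    rw [ENNReal.ofReal_le_iff_le_toReal (hG.measure_ne_top hβ _)]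
    refine (Real.le_log_iff_exp_le (hG.measureReal_cylOf_pos hf hconn hβ y n)).1 ?_
    rw [le_div_iff₀ hβ0] at hle
    nlinarith
  obtain ⟨z, hz, hzheavy⟩ := hG.exists_forall_isHeavy_cylOf hf
    (fun β hβ => hV.le_of_isSubaction (hG.isSubaction hf hβ)) hU hheavy
  have hrate := hV.rateFunction_le (hG.le_birkhoff_of_isHeavy hf hconn hμ hV hU hzheavy)
  exact (hc.trans_le ((EReal.coe_ennreal_le_coe_ennreal_iff.2 (iInf₂_le z hz)).trans hrate)).false

theorem IsGibbsFamily.tendsto_log_measure_cylOf (hf : IsControlled f s C M)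
    (hG : IsGibbsFamily f M D Q φ q μ) (hconn : IsConnectedVia A K F)
    (hμ : ∀ μ', IsMaximizing f μ' → μ' = μmax) (hV : IsCalibrated f V (mf f)) (y : MarkovShift A)
    (n : ℕ) :
    Tendsto (fun β => ((Real.log ((μ β).real (cylOf y n)) / β : ℝ) : EReal)) atTop
      (𝓝 (-((⨅ x ∈ cylOf y n, rateFunction f V x : ℝ≥0∞) : EReal))) := by
  refine tendsto_order.2 ⟨fun a ha => ?_, fun a ha => ?_⟩ <;>
    obtain ⟨c, hc, hc'⟩ := EReal.lt_iff_exists_real_btwn.1 ha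
  · rw [EReal.lt_neg_comm, ← EReal.coe_neg] at hc'
    filter_upwards [hG.eventually_neg_le_log_measure_cylOf hf hconn hμ hV hc'] with β hβ
    exact hc.trans_le (EReal.coe_le_coe (neg_neg c ▸ hβ))
  · rw [EReal.neg_lt_comm, ← EReal.coe_neg] at hc
    filter_upwards [hG.eventually_log_measure_cylOf_lt hf hconn hμ hV hc] with β hβ
    exact (EReal.coe_lt_coe (neg_neg c ▸ hβ)).trans hc'

end LargeDeviations

/-- **Large Deviation Principle at zero temperature** (Theorem A).
For a topologically mixing BIP countable Markov shift and a Walters potential `f` with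
`Var₁ f < ∞`, finite Gurevich pressure and a unique maximizing measure, the family of
Gibbs/equilibrium measures `μ_β` of `βf` satisfies, for every nonempty cylinder `C`,
`lim_{β→∞} (1/β) log μ_β(C) = - inf_{x ∈ C} I(x)` with
`I(x) = -Σ_{j≥0} (f + V - V∘σ - m(f))(σʲ x)` for any bounded calibrated sub-action `V`. -/
theorem large_deviation_principle
    (A : ℕ → ℕ → Bool)
    (hmix : TopologicallyMixing A)
    (hbip : FinitelyPrimitive A)
    (f : MarkovShift A → ℝ)
    (hWalters : SatisfiesWalters f)
    (hVar1 : Var1Finite f)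
    (P : ℝ → ℝ)
    (hPfin : HasGurevichPressure f (P 1))
    (μmax : Measure (MarkovShift A))
    (hmax : IsMaximizing f μmax)
    (huniq : ∀ ν', IsMaximizing f ν' → ν' = μmax)
    (h : ℝ → MarkovShift A → ℝ)
    (ν : ℝ → Measure (MarkovShift A))
    (hRPF : ∀ β : ℝ, 1 < β → IsRPF (fun x => β * f x) (P β) (h β) (ν β))
    (V : MarkovShift A → ℝ)
    (hV : IsCalibratedSubaction f V) :
    ∀ w : List ℕ, (cylinder (A := A) w).Nonempty →
      Tendsto
        (fun β : ℝ => (((1 / β) * Real.log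
            (((gibbs (h β) (ν β)) (cylinder w)).toReal) : ℝ) : EReal))
        atTop
        (𝓝 (- ((⨅ x ∈ cylinder (A := A) w,
            ∑' j : ℕ, ENNReal.ofReal
              (-(f (shift^[j] x) + V (shift^[j] x) - V (shift (shift^[j] x)) - mf f))
            : ℝ≥0∞) : EReal))) := by
  rintro w ⟨y, hy⟩
  have : Nonempty (MarkovShift A) := ⟨y⟩
  have := hmax.1.1
  obtain ⟨K, F, hconn⟩ := hbip.exists_isConnectedVia
  obtain ⟨C, hC⟩ := hVar1.exists_forall_abs_sub_le
  have hf := hWalters.isControlled hconn hC hPfin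
  obtain ⟨b, -, hb⟩ := exists_forall_mem_finset_neg_le hf.symbol_le F
  have hG := isGibbsFamily_of_isRPF hf hconn hb
    ((le_add_of_nonneg_right zero_le_one).trans (Real.add_one_le_exp _)) hRPF
  have hlim := hG.tendsto_log_measure_cylOf hf hconn huniq hV.isCalibrated y w.length
  rw [← cylinder_eq_cylOf hy] at hlim
  simp only [one_div_mul_eq_div]
  exact hlim

end MarkovShift
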